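/- Let λ/μ be a skew shape with λ, μ partitions with at most n parts and take the full flag Φ = (n, n, …, n). Then g_{λ/μ}(X_Φ; t) = Σ_{α ∈ ℤ₊ⁿ} t^α Σ_Q s_{sh(Q)}(x_1,…,x_n), where for each α the inner sum runs over all (λ/μ, (n,…,n))-compatible tableaux Q for RPP with ceq(Q) = α; that is, the refined dual stable Grothendieck polynomial g̃_{λ/μ}(x; t) equals Σ_{Q ∈ 𝕋(λ/μ)} t^{ceq(Q)} s_{sh(Q)}(x), a tableaux Schur expansion. -/

import Mathlib

/-!
Common combinatorial framework for flagged refined stable Grothendieck polynomials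
of skew shapes: skew shapes, semistandard set-valued tableaux, the signature-rule
crystal operators, reading words, Knuth equivalence, the Burge correspondence and
the Chan–Pflueger skew set-valued row insertion (as interfaces), Demazure crystals
and key polynomials.
-/

open Classical

attribute [local instance 2000] Classical.propDecidable

noncomputable section

namespace SkewG

/-! ### Cells and shapes -/

/-- A cell `(i, j)`: row `i`, column `j` (both 0-indexed). -/
abbrev Cell : Type := ℕ × ℕ

/-- A finite set of cells is the Young diagram of a partition iff it is a lower set. -/
def IsPartitionShape (s : Finset Cell) : Prop :=
  ∀ i j i' j', (i, j) ∈ s → i' ≤ i → j' ≤ j → (i', j') ∈ s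

/-- The shape has at most `n` parts (rows `0, …, n-1`). -/
def AtMostRows (s : Finset Cell) (n : ℕ) : Prop := ∀ c ∈ s, c.1 < n

/-- Two cells share a side. -/
def Adj (c d : Cell) : Prop :=
  (c.1 = d.1 ∧ (c.2 = d.2 + 1 ∨ d.2 = c.2 + 1)) ∨
  (c.2 = d.2 ∧ (c.1 = d.1 + 1 ∨ d.1 = c.1 + 1))

/-- Any two boxes of `s` are linked by a path inside `s`. -/
def ConnectedShape (s : Finset Cell) : Prop :=
  ∀ c ∈ s, ∀ d ∈ s,
    Relation.ReflTransGen (fun a b => a ∈ s ∧ b ∈ s ∧ Adj a b) c d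

/-- `s` is a skew shape `λ/μ`. -/
def IsSkewShape (s : Finset Cell) : Prop :=
  ∃ lam mu : Finset Cell, IsPartitionShape lam ∧ IsPartitionShape mu ∧
    mu ⊆ lam ∧ s = lam \ mu

/-! ### Tableaux -/

/-- A semistandard set-valued tableau on the cell set `s`, with entries in `{1, …, n}`:
nonempty sets on `s`, empty outside, rows weakly increasing, columns strictly increasing. -/
def IsSVTOn (n : ℕ) (s : Finset Cell) (T : Cell → Finset ℕ) : Prop :=
  (∀ c ∈ s, (T c).Nonempty) ∧
  (∀ c, c ∉ s → T c = ∅) ∧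
  (∀ c, ∀ x ∈ T c, 1 ≤ x ∧ x ≤ n) ∧
  (∀ i j, (i, j) ∈ s → (i, j + 1) ∈ s →
    ∀ x ∈ T (i, j), ∀ y ∈ T (i, j + 1), x ≤ y) ∧
  (∀ i j, (i, j) ∈ s → (i + 1, j) ∈ s →
    ∀ x ∈ T (i, j), ∀ y ∈ T (i + 1, j), x < y)

/-- An ordinary (single-valued) semistandard Young tableau on `s`; `0` outside `s`. -/
def IsSSYTOn (s : Finset Cell) (T : Cell → ℕ) : Prop :=
  (∀ c ∈ s, 1 ≤ T c) ∧
  (∀ c, c ∉ s → T c = 0) ∧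
  (∀ i j, (i, j) ∈ s → (i, j + 1) ∈ s → T (i, j) ≤ T (i, j + 1)) ∧
  (∀ i j, (i, j) ∈ s → (i + 1, j) ∈ s → T (i, j) < T (i + 1, j))

/-- A reverse row-strict tableau: rows strictly decreasing, columns weakly decreasing. -/
def IsRevRowStrictOn (s : Finset Cell) (T : Cell → ℕ) : Prop :=
  (∀ c ∈ s, 1 ≤ T c) ∧
  (∀ c, c ∉ s → T c = 0) ∧
  (∀ i j, (i, j) ∈ s → (i, j + 1) ∈ s → T (i, j + 1) < T (i, j)) ∧
  (∀ i j, (i, j) ∈ s → (i + 1, j) ∈ s → T (i + 1, j) ≤ T (i, j))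

/-- Row bounded: entries in (0-indexed) row `i` — i.e. row `i+1` — are `< i+1`. -/
def IsRowBounded (s : Finset Cell) (T : Cell → ℕ) : Prop :=
  ∀ c ∈ s, T c ≤ c.1

/-- Row weakly bounded: entries in row `i+1` (1-indexed) are `≤ i+1`. -/
def IsRowWeaklyBounded (s : Finset Cell) (T : Cell → ℕ) : Prop :=
  ∀ c ∈ s, T c ≤ c.1 + 1

/-- Number of occurrences of the letter `v` in a set-valued tableau. -/
def wtOn (s : Finset Cell) (T : Cell → Finset ℕ) (v : ℕ) : ℕ :=
  ∑ c ∈ s, if v ∈ T c then 1 else 0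

/-- Number of occurrences of the letter `v` in a single-valued tableau. -/
def wtS (s : Finset Cell) (T : Cell → ℕ) (v : ℕ) : ℕ :=
  ∑ c ∈ s, if T c = v then 1 else 0

/-- Excess in (0-indexed) row `i`: number of entries minus number of boxes. -/
def exRow (s : Finset Cell) (T : Cell → Finset ℕ) (i : ℕ) : ℕ :=
  (∑ c ∈ s.filter (fun c => c.1 = i), (T c).card) - (s.filter (fun c => c.1 = i)).card

/-- Total excess `|ex(T)|`. -/
def exTotal (s : Finset Cell) (T : Cell → Finset ℕ) : ℕ :=
  (∑ c ∈ s, (T c).card) - s.card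

/-- A flag (0-indexed): weakly increasing on rows `0, …, n-1`, positive, with `Φ (n-1) = n`. -/
def IsFlag (n : ℕ) (Φ : ℕ → ℕ) : Prop :=
  (∀ i j, i ≤ j → j < n → Φ i ≤ Φ j) ∧ (∀ i, i < n → 1 ≤ Φ i) ∧ Φ (n - 1) = n

/-- A set-valued tableau respects the flag `Φ`: entries of row `i` are at most `Φ i`. -/
def RespectsFlag (Φ : ℕ → ℕ) (T : Cell → Finset ℕ) : Prop :=
  ∀ i j, ∀ x ∈ T (i, j), x ≤ Φ i

/-- A single-valued tableau on `s` respects the flag `Φ`. -/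
def RespectsFlagS (s : Finset Cell) (Φ : ℕ → ℕ) (T : Cell → ℕ) : Prop :=
  ∀ c ∈ s, T c ≤ Φ c.1

/-- View a single-valued tableau as a set-valued one. -/
def svtOf (T : Cell → ℕ) : Cell → Finset ℕ := fun c => if T c = 0 then ∅ else {T c}

/-! ### The signature-rule crystal operators on set-valued fillings -/

def colHas (T : Cell → Finset ℕ) (v j : ℕ) : Prop := ∃ i, v ∈ T (i, j)

/-- Column `j` gets a `+` for the letter `v`: it contains `v` but not `v+1`. -/
def IsPlusCol (T : Cell → Finset ℕ) (v j : ℕ) : Prop := colHas T v j ∧ ¬ colHas T (v + 1) j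

/-- Column `j` gets a `-` for the letter `v`: it contains `v+1` but not `v`. -/
def IsMinusCol (T : Cell → Finset ℕ) (v j : ℕ) : Prop := colHas T (v + 1) j ∧ ¬ colHas T v j

def plusCount (T : Cell → Finset ℕ) (v a b : ℕ) : ℕ :=
  ((Finset.Ico a b).filter (fun j => IsPlusCol T v j)).card

def minusCount (T : Cell → Finset ℕ) (v a b : ℕ) : ℕ :=
  ((Finset.Ico a b).filter (fun j => IsMinusCol T v j)).card

/-- The `+` above column `j` survives the successive cancellation of `(-,+)` pairs. -/
def UnmatchedPlus (T : Cell → Finset ℕ) (v j : ℕ) : Prop :=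
  IsPlusCol T v j ∧ minusCount T v 0 j < plusCount T v 0 (j + 1)

/-- The `-` above column `j` survives the successive cancellation of `(-,+)` pairs. -/
def UnmatchedMinus (T : Cell → Finset ℕ) (v j : ℕ) : Prop :=
  IsMinusCol T v j ∧ ∀ b, plusCount T v (j + 1) b ≤ minusCount T v (j + 1) b

/-- The lowering operator `f_v` on raw set-valued fillings (`none` encodes `0`). -/
def fFill (v : ℕ) (T : Cell → Finset ℕ) : Option (Cell → Finset ℕ) :=
  if h : ∃ j, UnmatchedPlus T v j then
    letI j := sSup {j | UnmatchedPlus T v j}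
    if hr : ∃ i, v ∈ T (i, j) then
      letI r := Classical.choose hr
      if v ∈ T (r, j + 1) then
        some (fun c =>
          if c = (r, j + 1) then (T c).erase v
          else if c = (r, j) then insert (v + 1) (T c)
          else T c)
      else
        some (fun c => if c = (r, j) then insert (v + 1) ((T c).erase v) else T c)
    else none
  else none

/-- The raising operator `e_v` on raw set-valued fillings (`none` encodes `0`). -/
def eFill (v : ℕ) (T : Cell → Finset ℕ) : Option (Cell → Finset ℕ) :=
  if h : ∃ j, UnmatchedMinus T v j then
    letI j := sInf {j | UnmatchedMinus T v j}
    if hr : ∃ i, (v + 1) ∈ T (i, j) then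
      letI r := Classical.choose hr
      if 1 ≤ j ∧ (v + 1) ∈ T (r, j - 1) then
        some (fun c =>
          if c = (r, j - 1) then (T c).erase (v + 1)
          else if c = (r, j) then insert v (T c)
          else T c)
      else
        some (fun c => if c = (r, j) then insert v ((T c).erase (v + 1)) else T c)
    else none
  else none

def fIter (v : ℕ) : ℕ → (Cell → Finset ℕ) → Option (Cell → Finset ℕ)
  | 0, T => some T
  | k + 1, T => (fIter v k T).bind (fFill v)

def eIter (v : ℕ) : ℕ → (Cell → Finset ℕ) → Option (Cell → Finset ℕ)
  | 0, T => some T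
  | k + 1, T => (eIter v k T).bind (eFill v)

/-- `φ_v(T) = max {k | f_v^k T ≠ 0}`. -/
def phiOp (v : ℕ) (T : Cell → Finset ℕ) : ℕ := sSup {k | (fIter v k T).isSome}

/-- `ε_v(T) = max {k | e_v^k T ≠ 0}`. -/
def epsOp (v : ℕ) (T : Cell → Finset ℕ) : ℕ := sSup {k | (eIter v k T).isSome}

/-- A highest weight element: killed by all raising operators. -/
def HighestWeight (n : ℕ) (T : Cell → Finset ℕ) : Prop :=
  ∀ v, 1 ≤ v → v + 1 ≤ n → eFill v T = none

/-- One step of the crystal graph (in either direction). -/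
def CrystRel (n : ℕ) (T U : Cell → Finset ℕ) : Prop :=
  ∃ v, 1 ≤ v ∧ v + 1 ≤ n ∧ (fFill v T = some U ∨ fFill v U = some T)

/-- The connected component of `S'` inside a subset `X` of a crystal. -/
def ComponentOf (n : ℕ) (X : Set (Cell → Finset ℕ)) (S' : Cell → Finset ℕ) :
    Set (Cell → Finset ℕ) :=
  {T | T ∈ X ∧ Relation.ReflTransGen (fun a b => a ∈ X ∧ b ∈ X ∧ CrystRel n a b) S' T}

/-! ### Words -/

/-- Columns of row `i` of `s`, listed from left to right. -/
def rowList (s : Finset Cell) (i : ℕ) : List ℕ :=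
  (List.range (s.sup Prod.snd + 1)).filter (fun j => decide ((i, j) ∈ s))

def rowLenOf (s : Finset Cell) (i : ℕ) : ℕ := (rowList s i).length

def rowWordOn (s : Finset Cell) (T : Cell → ℕ) (i : ℕ) : List ℕ :=
  (rowList s i).map (fun j => T (i, j))

/-- The row reading word: rows bottom to top, each row left to right. -/
def readingWordOn (s : Finset Cell) (T : Cell → ℕ) : List ℕ :=
  ((List.range (s.sup Prod.fst + 1)).reverse.map (rowWordOn s T)).flatten

/-- The word `b(s)`: `(row length of row i)` copies of the letter `i+1`,
rows listed from the bottom up. -/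
def bwordOn (s : Finset Cell) : List ℕ :=
  ((List.range (s.sup Prod.fst + 1)).reverse.map
    (fun i => List.replicate (rowList s i).length (i + 1))).flatten

/-- The word `b(α)` of a composition: `α i` copies of the letter `i+1`, decreasing letters. -/
def bwordComp (n : ℕ) (α : ℕ → ℕ) : List ℕ :=
  ((List.range n).reverse.map (fun i => List.replicate (α i) (i + 1))).flatten

/-- Elementary Knuth moves. -/
inductive KnuthStep : List ℕ → List ℕ → Prop
  | kxzy (u w : List ℕ) (x y z : ℕ) (h1 : x ≤ y) (h2 : y < z) :
      KnuthStep (u ++ x :: z :: y :: w) (u ++ z :: x :: y :: w)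
  | kyxz (u w : List ℕ) (x y z : ℕ) (h1 : x < y) (h2 : y ≤ z) :
      KnuthStep (u ++ y :: x :: z :: w) (u ++ y :: z :: x :: w)

/-- Knuth (plactic) equivalence of words. -/
def KnuthEquiv : List ℕ → List ℕ → Prop := Relation.EqvGen KnuthStep

/-- Yamanouchi word: in every suffix, `v+1` occurs at least as often as `v+2`. -/
def IsYamanouchi (w : List ℕ) : Prop :=
  ∀ k v, (w.drop k).count (v + 2) ≤ (w.drop k).count (v + 1)

/-- The biword conditions (columns listed left to right with weakly decreasing top row,
strictly decreasing the top whenever the bottom strictly decreases). -/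
def IsBiword (top bot : List ℕ) : Prop :=
  top.length = bot.length ∧
  (∀ x ∈ top, 1 ≤ x) ∧ (∀ x ∈ bot, 1 ≤ x) ∧
  ∀ p, p + 1 < top.length →
    top.getD (p + 1) 0 ≤ top.getD p 0 ∧
    (bot.getD (p + 1) 0 < bot.getD p 0 → top.getD (p + 1) 0 < top.getD p 0)

/-! ### Sorting, Demazure crystals -/

/-- The `i`-th largest value (0-indexed) among `α 0, …, α (n-1)`: the decreasing
rearrangement `α†`. -/
def dsort (n : ℕ) (α : ℕ → ℕ) (i : ℕ) : ℕ :=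
  sSup {m | i < ((Finset.range n).filter (fun k => m ≤ α k)).card}

/-- The Young diagram of a weakly decreasing function. -/
def diagOf (n : ℕ) (f : ℕ → ℕ) : Finset Cell :=
  (Finset.product (Finset.range n) (Finset.range (f 0))).filter (fun c => c.2 < f c.1)

/-- product of simple transpositions `s_{i} = (i, i+1)` (0-indexed coordinates). -/
def permOfWord (is : List ℕ) : Equiv.Perm ℕ :=
  (is.map (fun i => Equiv.swap i (i + 1))).prod

def IsReducedWord (τ : Equiv.Perm ℕ) (is : List ℕ) : Prop :=
  permOfWord is = τ ∧ ∀ js : List ℕ, permOfWord js = τ → is.length ≤ js.length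

/-- `τ • α` with `(τ • α) (τ i) = α i`. -/
def permuteComp (τ : Equiv.Perm ℕ) (f : ℕ → ℕ) : ℕ → ℕ := fun i => f (τ.symm i)

/-- The unique SSYT of partition shape `sh` whose weight equals its shape
(`i+1`'s in row `i`). -/
def highestTabOf (sh : Finset Cell) : Cell → ℕ := fun c => if c ∈ sh then c.1 + 1 else 0

/-- Apply `f_{i₁}^{k₁} ∘ ⋯ ∘ f_{i_p}^{k_p}` (rightmost factor first); the letters of the
first list are crystal indices. -/
def applyF : List ℕ → List ℕ → (Cell → Finset ℕ) → Option (Cell → Finset ℕ)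
  | [], _, T => some T
  | _ :: _, [], T => some T
  | i :: is, k :: ks, T => (applyF is ks T).bind (fIter i k)

/-- The Demazure crystal `B_w(sh)` (as a set of set-valued fillings all of whose
values are singletons), for a given word for `w`; the word is a list of crystal
indices `i` (acting on the letters `i, i+1`). -/
def DemazureSet (sh : Finset Cell) (word : List ℕ) : Set (Cell → Finset ℕ) :=
  {T | ∃ ks : List ℕ, ks.length = word.length ∧
        applyF word ks (svtOf (highestTabOf sh)) = some T}

/-! ### Key polynomials via Demazure operators -/

/-- `T_i` applied to a monomial `x^a` (the exact quotient
`(x_i x^a - x_{i+1} s_i x^a)/(x_i - x_{i+1})`), written as an explicit sum. -/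
def demMono (n : ℕ) (i : ℕ) (h : i + 1 < n) (a : Fin n →₀ ℕ) : MvPolynomial (Fin n) ℤ :=
  letI i0 : Fin n := ⟨i, Nat.lt_of_succ_lt h⟩
  letI i1 : Fin n := ⟨i + 1, h⟩
  letI p := a i0
  letI q := a i1
  if q ≤ p then
    ∑ m ∈ Finset.Icc q p,
      MvPolynomial.monomial ((a.update i0 m).update i1 (p + q - m)) (1 : ℤ)
  else
    - ∑ m ∈ Finset.Ico (p + 1) q,
      MvPolynomial.monomial ((a.update i0 m).update i1 (p + q - m)) (1 : ℤ)

/-- The Demazure operator `T_i` (0-indexed: acts on the variables `x_i, x_{i+1}`). -/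
def demOp (n : ℕ) (i : ℕ) (f : MvPolynomial (Fin n) ℤ) : MvPolynomial (Fin n) ℤ :=
  if h : i + 1 < n then
    ∑ a ∈ f.support, MvPolynomial.C (MvPolynomial.coeff a f) * demMono n i h a
  else f

/-- `T_w` along a word (leftmost letter applied last). -/
def demWord (n : ℕ) : List ℕ → MvPolynomial (Fin n) ℤ → MvPolynomial (Fin n) ℤ
  | [], f => f
  | i :: is, f => demOp n i (demWord n is f)

/-- The monomial `x^α` (coordinate `i` of `Fin n` carries `α i`). -/
def xMono (n : ℕ) (α : ℕ → ℕ) : MvPolynomial (Fin n) ℤ :=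
  ∏ i : Fin n, MvPolynomial.X i ^ α (i : ℕ)

/-- The key polynomial `κ_α = T_w x^{α†}` for (any) reduced word of a permutation `w`
with `w • α† = α`. -/
def keyPoly (n : ℕ) (α : ℕ → ℕ) : MvPolynomial (Fin n) ℤ :=
  if h : ∃ is : List ℕ, IsReducedWord (permOfWord is) is ∧
      (∀ i, i < n → permuteComp (permOfWord is) (dsort n α) i = α i)
  then demWord n h.choose (xMono n (dsort n α))
  else 0

/-! ### Generating polynomials -/

abbrev XPoly (n : ℕ) := MvPolynomial (Fin n) ℤ
abbrev XTPoly (n : ℕ) := MvPolynomial (Fin n) (MvPolynomial (Fin n) ℤ)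

/-- Embed an `x`-polynomial into the ring `ℤ[t][x]`. -/
def liftX (n : ℕ) (f : XPoly n) : XTPoly n :=
  MvPolynomial.map (MvPolynomial.C : ℤ →+* MvPolynomial (Fin n) ℤ) f

/-- The monomial `t^α` inside `ℤ[t][x]` (as a constant in the `x`-variables). -/
def tMono (n : ℕ) (α : ℕ → ℕ) : XTPoly n :=
  MvPolynomial.C (∏ i : Fin n, MvPolynomial.X i ^ α (i : ℕ))

/-- The monomial `x^{wt T}` for a set-valued tableau, inside `ℤ[t][x]`. -/
def xWt (n : ℕ) (s : Finset Cell) (T : Cell → Finset ℕ) : XTPoly n :=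
  ∏ i : Fin n, MvPolynomial.X i ^ wtOn s T ((i : ℕ) + 1)

/-- extend a `Fin n`-indexed composition by zero. -/
def extendf (n : ℕ) (α : Fin n → ℕ) : ℕ → ℕ :=
  fun r => if h : r < n then α ⟨r, h⟩ else 0

/-- The flagged refined skew stable Grothendieck polynomial
`G_{λ/μ}(X_Φ; t) = Σ_T (-1)^{|ex T|} t^{ex T} x^{wt T}`. -/
def Gflagged (n : ℕ) (s : Finset Cell) (Φ : ℕ → ℕ) : XTPoly n :=
  ∑ᶠ T : {T : Cell → Finset ℕ // IsSVTOn n s T ∧ RespectsFlag Φ T},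
    ((-1 : XTPoly n) ^ exTotal s T.1) * tMono n (exRow s T.1) * xWt n s T.1

/-- The flagged skew Schur polynomial `s_{λ/μ}(X_Φ)`. -/
def sFlagged (n : ℕ) (s : Finset Cell) (Φ : ℕ → ℕ) : XPoly n :=
  ∑ᶠ U : {U : Cell → ℕ // IsSSYTOn s U ∧ (∀ c ∈ s, U c ≤ n) ∧ RespectsFlagS s Φ U},
    ∏ i : Fin n, MvPolynomial.X i ^ wtS s U.1 ((i : ℕ) + 1)

/-- The Schur polynomial `s_ν(x_1, …, x_n)` of a partition shape. -/
def schurOf (n : ℕ) (sh : Finset Cell) : XPoly n :=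
  ∑ᶠ U : {U : Cell → ℕ // IsSSYTOn sh U ∧ ∀ c ∈ sh, U c ≤ n},
    ∏ i : Fin n, MvPolynomial.X i ^ wtS sh U.1 ((i : ℕ) + 1)

/-- The stable Grothendieck polynomial `G_ν(x_1,…,x_n) = RG_ν(x; 1)`. -/
def RGone (n : ℕ) (sh : Finset Cell) : XPoly n :=
  ∑ᶠ T : {T : Cell → Finset ℕ // IsSVTOn n sh T},
    ((-1 : XPoly n) ^ exTotal sh T.1) *
      ∏ i : Fin n, MvPolynomial.X i ^ wtOn sh T.1 ((i : ℕ) + 1)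

/-! ### Reverse plane partitions -/

/-- A reverse plane partition on `s` (weakly increasing rows and columns, `0` outside). -/
def IsRPPOn (s : Finset Cell) (R : Cell → ℕ) : Prop :=
  (∀ c ∈ s, 1 ≤ R c) ∧ (∀ c, c ∉ s → R c = 0) ∧
  (∀ i j, (i, j) ∈ s → (i, j + 1) ∈ s → R (i, j) ≤ R (i, j + 1)) ∧
  (∀ i j, (i, j) ∈ s → (i + 1, j) ∈ s → R (i, j) ≤ R (i + 1, j))

/-- `wt(R) v` = number of columns of `R` containing `v`. -/
def wtRPP (s : Finset Cell) (R : Cell → ℕ) (v : ℕ) : ℕ :=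
  ((Finset.range (s.sup Prod.snd + 1)).filter
    (fun j => ∃ i, (i, j) ∈ s ∧ R (i, j) = v)).card

/-- `ceq(R) i` = number of boxes of row `i` whose entry equals the entry just below. -/
def ceqOn (s : Finset Cell) (R : Cell → ℕ) (i : ℕ) : ℕ :=
  (s.filter (fun c => c.1 = i ∧ (c.1 + 1, c.2) ∈ s ∧ R c = R (c.1 + 1, c.2))).card

/-- The dual stable Grothendieck polynomial `g_ν(x_1,…,x_n)`. -/
def gDual (n : ℕ) (sh : Finset Cell) : XPoly n :=
  ∑ᶠ R : {R : Cell → ℕ // IsRPPOn sh R ∧ ∀ c ∈ sh, R c ≤ n},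
    ∏ i : Fin n, MvPolynomial.X i ^ wtRPP sh R.1 ((i : ℕ) + 1)

/-- The flagged refined dual stable Grothendieck polynomial
`g_{λ/μ}(X_Φ; t) = Σ_R t^{ceq R} x^{wt R}`. -/
def gFlagged (n : ℕ) (s : Finset Cell) (Φ : ℕ → ℕ) : XTPoly n :=
  ∑ᶠ R : {R : Cell → ℕ // IsRPPOn s R ∧ RespectsFlagS s Φ R},
    tMono n (ceqOn s R.1) * ∏ i : Fin n, MvPolynomial.X i ^ wtRPP s R.1 ((i : ℕ) + 1)

/-- A cell is circled in an RPP: topmost occurrence of its letter in its column. -/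
def rppCircled (s : Finset Cell) (R : Cell → ℕ) (c : Cell) : Prop :=
  c ∈ s ∧ (c.1 = 0 ∨ (c.1 - 1, c.2) ∉ s ∨ R (c.1 - 1, c.2) ≠ R c)

/-- The reading word `w(R)` of an RPP: circled entries, bottom row up, left to right. -/
def rppReadingWord (s : Finset Cell) (R : Cell → ℕ) : List ℕ :=
  ((List.range (s.sup Prod.fst + 1)).reverse.map (fun i =>
    ((rowList s i).filter (fun j => decide (rppCircled s R (i, j)))).map
      (fun j => R (i, j)))).flatten

/-- The row reading word `r_T` of an RPP: omit entries equal to the entry just below,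
read rows bottom to top, left to right. -/
def rppRowWord (s : Finset Cell) (R : Cell → ℕ) : List ℕ :=
  ((List.range (s.sup Prod.fst + 1)).reverse.map (fun i =>
    ((rowList s i).filter (fun j => decide ((i + 1, j) ∉ s ∨ R (i + 1, j) ≠ R (i, j)))).map
      (fun j => R (i, j)))).flatten

/-- The height word `h(T)`: the (1-indexed) row numbers of the letters of `r_T`. -/
def rppHeights (s : Finset Cell) (R : Cell → ℕ) : List ℕ :=
  ((List.range (s.sup Prod.fst + 1)).reverse.map (fun i =>
    ((rowList s i).filter (fun j => decide ((i + 1, j) ∉ s ∨ R (i + 1, j) ≠ R (i, j)))).map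
      (fun _ => i + 1))).flatten

/-- minimum entry of a box. -/
def boxMin (A : Finset ℕ) : ℕ := sInf (A : Set ℕ)

/-- non-minimal entries of a box, largest first. -/
def boxExtras (A : Finset ℕ) : List ℕ :=
  ((List.range (A.sup id + 1)).filter (fun x => decide (x ∈ A ∧ x ≠ boxMin A))).reverse

/-- The reading word `w(S)` of a set-valued tableau: rows bottom to top; in each row
first the non-minimal entries, boxes right to left (largest to smallest within a box),
then the minimal entries, boxes left to right. -/
def svtReadingWord (s : Finset Cell) (T : Cell → Finset ℕ) : List ℕ :=
  ((List.range (s.sup Prod.fst + 1)).reverse.map (fun i =>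
    (((rowList s i).reverse.map (fun j => boxExtras (T (i, j)))).flatten) ++
      ((rowList s i).map (fun j => boxMin (T (i, j)))))).flatten

/-! ### The `*`-composition of shapes and tableaux -/

def minRowOf (s : Finset Cell) : ℕ := sInf (Prod.fst '' (s : Set Cell))
def minColOf (s : Finset Cell) : ℕ := sInf (Prod.snd '' (s : Set Cell))

def rowSpan (s : Finset Cell) : ℕ := if s = ∅ then 0 else s.sup Prod.fst + 1 - minRowOf s
def colSpan (s : Finset Cell) : ℕ := if s = ∅ then 0 else s.sup Prod.snd + 1 - minColOf s

def rowOffset (shapes : List (Finset Cell)) (i : ℕ) : ℕ := ((shapes.take i).map rowSpan).sum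
def colOffset (shapes : List (Finset Cell)) (i : ℕ) : ℕ :=
  ((shapes.drop (i + 1)).map colSpan).sum

def embedCell (shapes : List (Finset Cell)) (i : ℕ) (c : Cell) : Cell :=
  (rowOffset shapes i + (c.1 - minRowOf (shapes.getD i ∅)),
   colOffset shapes i + (c.2 - minColOf (shapes.getD i ∅)))

def unembedCell (shapes : List (Finset Cell)) (i : ℕ) (c : Cell) : Cell :=
  (c.1 - rowOffset shapes i + minRowOf (shapes.getD i ∅),
   c.2 - colOffset shapes i + minColOf (shapes.getD i ∅))

/-- `θ_k * ⋯ * θ_1` (the list is ordered from the top component down). -/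
def compositeShape (shapes : List (Finset Cell)) : Finset Cell :=
  (Finset.range shapes.length).biUnion (fun i => (shapes.getD i ∅).image (embedCell shapes i))

/-- `T_k * ⋯ * T_1`. -/
def compositeTab (shapes : List (Finset Cell)) (Ts : List (Cell → ℕ)) : Cell → ℕ :=
  fun c => ∑ i ∈ Finset.range shapes.length,
    if unembedCell shapes i c ∈ shapes.getD i ∅ ∧
        embedCell shapes i (unembedCell shapes i c) = c
    then Ts.getD i (fun _ => 0) (unembedCell shapes i c) else 0

/-- `φ_1 * ⋯ * φ_k`: concatenation of flags along the row blocks of the components. -/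
def compositeFlag (shapes : List (Finset Cell)) (flags : List (ℕ → ℕ)) : ℕ → ℕ :=
  fun r => ∑ i ∈ Finset.range shapes.length,
    if rowOffset shapes i ≤ r ∧ r < rowOffset shapes i + rowSpan (shapes.getD i ∅)
    then flags.getD i (fun _ => 0) (r - rowOffset shapes i) else 0

/-- `comps` is the list of connected components of `s`, from the top down. -/
def IsComponents (s : Finset Cell) (comps : List (Finset Cell)) : Prop :=
  (∀ c, c ∈ s ↔ ∃ i < comps.length, c ∈ comps.getD i ∅) ∧
  (∀ i, i < comps.length → (comps.getD i ∅).Nonempty) ∧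
  (∀ i, i < comps.length → ConnectedShape (comps.getD i ∅)) ∧
  (∀ i j, i < j → j < comps.length →
    ∀ c ∈ comps.getD i ∅, ∀ d ∈ comps.getD j ∅, c.1 < d.1) ∧
  (∀ i j, i < comps.length → j < comps.length → i ≠ j →
    ∀ c ∈ comps.getD i ∅, ∀ d ∈ comps.getD j ∅, ¬ Adj c d)

/-- Restrict a filling to a sub-shape. -/
def restrict (u : Finset Cell) (T : Cell → Finset ℕ) : Cell → Finset ℕ :=
  fun c => if c ∈ u then T c else ∅

/-! ### The Burge correspondence (interface) -/

structure BurgeOut where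
  sh : Finset Cell
  P : Cell → ℕ
  Q : Cell → ℕ

/-- The Burge correspondence: a bijection between biwords and pairs of semistandard
Young tableaux of the same partition shape, the insertion tableau `P` being Knuth
equivalent to the bottom word and the recording tableau `Q` having the content of the
top word. -/
structure BurgeData where
  out : List ℕ → List ℕ → BurgeOut
  shape_part : ∀ top bot, IsBiword top bot → IsPartitionShape (out top bot).sh
  ssytP : ∀ top bot, IsBiword top bot → IsSSYTOn (out top bot).sh (out top bot).P
  ssytQ : ∀ top bot, IsBiword top bot → IsSSYTOn (out top bot).sh (out top bot).Q
  knuthP : ∀ top bot, IsBiword top bot →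
    KnuthEquiv (readingWordOn (out top bot).sh (out top bot).P) bot
  contentP : ∀ top bot, IsBiword top bot →
    ∀ v, wtS (out top bot).sh (out top bot).P v = bot.count v
  contentQ : ∀ top bot, IsBiword top bot →
    ∀ v, wtS (out top bot).sh (out top bot).Q v = top.count v
  inj : ∀ top bot top' bot', IsBiword top bot → IsBiword top' bot' →
    out top bot = out top' bot' → top = top' ∧ bot = bot'
  surj : ∀ (sh : Finset Cell) (P Q : Cell → ℕ), IsPartitionShape sh →
    IsSSYTOn sh P → IsSSYTOn sh Q →
    ∃ top bot, IsBiword top bot ∧ out top bot = ⟨sh, P, Q⟩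

/-! ### The Chan–Pflueger skew set-valued row insertion (interface) -/

structure CPOut where
  sTil : Finset Cell
  Q : Cell → ℕ
  Til : Cell → ℕ

/-- The conditions satisfied by the output `(θ̃, Q'', T̃)` of the Chan–Pflueger
insertion applied to a set-valued tableau of connected skew shape `s` with excess `e`. -/
def CPTarget (n : ℕ) (s : Finset Cell) (e : ℕ → ℕ) (o : CPOut) : Prop :=
  s ⊆ o.sTil ∧ IsSkewShape o.sTil ∧ ConnectedShape o.sTil ∧
  (∀ c ∈ o.sTil, ∃ r, (r, c.2) ∈ s) ∧
  (∀ c ∈ o.sTil, c ∉ s → ∃ r, r < c.1 ∧ (r, c.2) ∈ s) ∧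
  IsRevRowStrictOn (o.sTil \ s) o.Q ∧ IsRowBounded (o.sTil \ s) o.Q ∧
  (∀ r, wtS (o.sTil \ s) o.Q (r + 1) = e r) ∧
  IsSSYTOn o.sTil o.Til ∧ (∀ c ∈ o.sTil, o.Til c ≤ n)

/-- Interface for the Chan–Pflueger skew set-valued row insertion (Algorithm 3.12 of
Chan–Pflueger): for each set-valued tableau `T` of connected skew shape `s` it
produces the final output `out s T = (θ̃, Q'', T̃)` together with the full sequence of
intermediate set-valued tableaux `steps s T`, each step adding one box. -/
structure CPData (n : ℕ) where
  out : Finset Cell → (Cell → Finset ℕ) → CPOut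
  steps : Finset Cell → (Cell → Finset ℕ) → List (Finset Cell × (Cell → Finset ℕ))
  valid : ∀ s T, IsSkewShape s → ConnectedShape s → IsSVTOn n s T →
    CPTarget n s (exRow s T) (out s T) ∧
    (∀ v, wtS (out s T).sTil (out s T).Til v = wtOn s T v)
  steps_first : ∀ s T, IsSkewShape s → ConnectedShape s → IsSVTOn n s T →
    (steps s T).head? = some (s, T)
  steps_last : ∀ s T, IsSkewShape s → ConnectedShape s → IsSVTOn n s T →
    (steps s T).getLast? = some ((out s T).sTil, svtOf (out s T).Til)
  steps_svt : ∀ s T, IsSkewShape s → ConnectedShape s → IsSVTOn n s T →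
    ∀ p ∈ steps s T, IsSVTOn n p.1 p.2
  steps_len : ∀ s T, IsSkewShape s → ConnectedShape s → IsSVTOn n s T →
    (steps s T).length = exTotal s T + 1
  steps_add : ∀ s T, IsSkewShape s → ConnectedShape s → IsSVTOn n s T →
    ∀ j, j + 1 < (steps s T).length →
      ((steps s T).getD j (∅, fun _ => ∅)).1 ⊆ ((steps s T).getD (j + 1) (∅, fun _ => ∅)).1 ∧
      (((steps s T).getD (j + 1) (∅, fun _ => ∅)).1 \
        ((steps s T).getD j (∅, fun _ => ∅)).1).card = 1
  bij : ∀ s, IsSkewShape s → ConnectedShape s → ∀ (e : ℕ → ℕ) (o : CPOut),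
    CPTarget n s e o →
    ∃! T : {T : Cell → Finset ℕ // IsSVTOn n s T ∧ ∀ r, exRow s T r = e r}, out s T.1 = o

/-- The rows (0-indexed) of the boxes added at the successive steps of the insertion. -/
def addedRows (n : ℕ) (cp : CPData n) (s : Finset Cell) (T : Cell → Finset ℕ) : List ℕ :=
  (List.range ((cp.steps s T).length - 1)).map (fun j =>
    ((((cp.steps s T).getD (j + 1) (∅, fun _ => ∅)).1 \
      (((cp.steps s T).getD j (∅, fun _ => ∅)).1)).sup Prod.fst))

/-- The sequence of flags `Φ^{(j)}`: when a box is added in (0-indexed) row `r`, the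
flag value of row `r` is replaced by the flag value of row `r - 1`. -/
def flagSeq (Φ : ℕ → ℕ) (ks : List ℕ) : ℕ → (ℕ → ℕ)
  | 0 => Φ
  | j + 1 => fun r => if r = ks.getD j 0 then flagSeq Φ ks j (r - 1) else flagSeq Φ ks j r

/-- The flag `Φ̃` induced by the insertion of `T`. -/
def inducedFlag (n : ℕ) (cp : CPData n) (s : Finset Cell) (T : Cell → Finset ℕ)
    (Φ : ℕ → ℕ) : ℕ → ℕ :=
  flagSeq Φ (addedRows n cp s T) (addedRows n cp s T).length

/-! ### Compatible tableaux for SVT -/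

def compTilShapes (n : ℕ) (cp : CPData n) (comps : List (Finset Cell))
    (T : Cell → Finset ℕ) : List (Finset Cell) :=
  comps.map (fun θ => (cp.out θ (restrict θ T)).sTil)

def compTilQs (n : ℕ) (cp : CPData n) (comps : List (Finset Cell))
    (T : Cell → Finset ℕ) : List (Cell → ℕ) :=
  comps.map (fun θ => (cp.out θ (restrict θ T)).Q)

def compTilTabs (n : ℕ) (cp : CPData n) (comps : List (Finset Cell))
    (T : Cell → Finset ℕ) : List (Cell → ℕ) :=
  comps.map (fun θ => (cp.out θ (restrict θ T)).Til)

/-- The composite shape `σ = σ_k * ⋯ * σ_1` of the insertion outputs. -/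
def insShape (n : ℕ) (cp : CPData n) (comps : List (Finset Cell))
    (T : Cell → Finset ℕ) : Finset Cell :=
  compositeShape (compTilShapes n cp comps T)

/-- The composite tableau `T̃ = T̃_k * ⋯ * T̃_1` of the insertion outputs. -/
def insTab (n : ℕ) (cp : CPData n) (comps : List (Finset Cell))
    (T : Cell → Finset ℕ) : Cell → ℕ :=
  compositeTab (compTilShapes n cp comps T) (compTilTabs n cp comps T)

/-- The restriction of a global flag to the row block of the `i`-th component. -/
def componentFlag (comps : List (Finset Cell)) (Φ : ℕ → ℕ) (i : ℕ) : ℕ → ℕ :=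
  fun r => Φ (rowOffset comps i + (r - minRowOf (comps.getD i ∅)))

/-- The composite induced flag `Φ̃ = Φ̃_1 * ⋯ * Φ̃_k`. -/
def insFlag (n : ℕ) (cp : CPData n) (comps : List (Finset Cell))
    (T : Cell → Finset ℕ) (Φ : ℕ → ℕ) : ℕ → ℕ :=
  compositeFlag (compTilShapes n cp comps T)
    ((List.range comps.length).map (fun i => fun p =>
      inducedFlag n cp (comps.getD i ∅) (restrict (comps.getD i ∅) T)
        (componentFlag comps Φ i) (minRowOf (comps.getD i ∅) + p)))

/-- The Burge correspondence applied to `⌊b(σ); r_{T̃}⌋`. -/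
def insBurge (n : ℕ) (B : BurgeData) (cp : CPData n) (comps : List (Finset Cell))
    (T : Cell → Finset ℕ) : BurgeOut :=
  B.out (bwordOn (insShape n cp comps T))
    (readingWordOn (insShape n cp comps T) (insTab n cp comps T))

/-- `p = (sh, rect(P̃), R)` arises from a highest weight element `P` of
`SVT(λ/μ, Φ)` of excess `e`; `R = p.Q` is then a `(λ/μ, Φ)`-compatible tableau
for SVT with `ex(R) = e`. -/
def IsCompatibleSVT (n : ℕ) (B : BurgeData) (cp : CPData n) (s : Finset Cell)
    (comps : List (Finset Cell)) (Φ : ℕ → ℕ) (e : ℕ → ℕ) (p : BurgeOut) : Prop :=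
  ∃ P : Cell → Finset ℕ, IsSVTOn n s P ∧ RespectsFlag Φ P ∧ HighestWeight n P ∧
    (∀ r, exRow s P r = e r) ∧ insBurge n B cp comps P = p

/-- Compatible of arbitrary excess. -/
def IsCompatibleSVT' (n : ℕ) (B : BurgeData) (cp : CPData n) (s : Finset Cell)
    (comps : List (Finset Cell)) (Φ : ℕ → ℕ) (p : BurgeOut) : Prop :=
  ∃ P : Cell → Finset ℕ, IsSVTOn n s P ∧ RespectsFlag Φ P ∧ HighestWeight n P ∧
    insBurge n B cp comps P = p

/-- The set `SVT_e(θ, Φ; θ̃, Q'')`. -/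
def PieceSet (n : ℕ) (cp : CPData n) (s : Finset Cell) (comps : List (Finset Cell))
    (Φ e : ℕ → ℕ) (tilShapes : List (Finset Cell)) (Qs : List (Cell → ℕ)) :
    Set (Cell → Finset ℕ) :=
  {T | IsSVTOn n s T ∧ RespectsFlag Φ T ∧ (∀ r, exRow s T r = e r) ∧
       compTilShapes n cp comps T = tilShapes ∧ compTilQs n cp comps T = Qs}

/-- The set `A(R, ν, Ψ)` of flagged tableaux of shape `ν` whose Burge pair is
`(rect(T), R)`. -/
def ASet (n : ℕ) (B : BurgeData) (sTil : Finset Cell) (Ψflag : ℕ → ℕ) (R : BurgeOut) :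
    Set (Cell → ℕ) :=
  {U | IsSSYTOn sTil U ∧ (∀ c ∈ sTil, U c ≤ n) ∧ RespectsFlagS sTil Ψflag U ∧
       (B.out (bwordOn sTil) (readingWordOn sTil U)).sh = R.sh ∧
       (B.out (bwordOn sTil) (readingWordOn sTil U)).Q = R.Q}

/-! ### Left keys and the Reiner–Shimozono flag compression (interfaces) -/

def colSetOf (sh : Finset Cell) (K : Cell → ℕ) (j : ℕ) : Set ℕ :=
  {v | ∃ i, (i, j) ∈ sh ∧ K (i, j) = v}

/-- A key tableau: the entries of each column contain those of the next column. -/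
def IsKeyTab (sh : Finset Cell) (K : Cell → ℕ) : Prop :=
  IsSSYTOn sh K ∧ ∀ j, colSetOf sh K (j + 1) ⊆ colSetOf sh K j

/-- Interface providing the left key `K₋(R)` of a semistandard Young tableau. -/
structure LeftKeyData where
  lk : Finset Cell → (Cell → ℕ) → (Cell → ℕ)
  key : ∀ sh R, IsPartitionShape sh → IsSSYTOn sh R → IsKeyTab sh (lk sh R)
  knuth : ∀ sh R, IsPartitionShape sh → IsSSYTOn sh R →
    ∀ v, wtS sh (lk sh R) v ≤ wtS sh R v + wtS sh R v + 1  -- (weakly specified)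

/-- `β(R)`: the weight of the left key of the recording tableau `R = p.Q`. -/
def betaOf (L : LeftKeyData) (p : BurgeOut) : ℕ → ℕ :=
  fun r => wtS p.sh (L.lk p.sh p.Q) (r + 1)

/-- concatenation of the factors `v^{(n)} ⋯ v^{(1)}` (factor `n-1` first, 0-indexed). -/
def wordOfFactors (n : ℕ) (v : ℕ → List ℕ) : List ℕ :=
  ((List.range n).reverse.map v).flatten

/-- The set `𝒲(α, Φ)` of Reiner–Shimozono: words `v = v^{(n)} ⋯ v^{(1)}` into maximal
row words of lengths `α_i`, letters of `v^{(i)}` at most `Φ_i`, whose Burge recording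
tableau for the biword `⌊b(α); v⌋` is `key(α)` (the unique SSYT of shape `α†` and
weight `α`). -/
def WSet (n : ℕ) (B : BurgeData) (α : ℕ → ℕ) (Φ : ℕ → ℕ) : Set (ℕ → List ℕ) :=
  {v | (∀ i, n ≤ i → v i = []) ∧
       (∀ i, (v i).length = α i) ∧
       (∀ i, (v i).Chain' (· ≤ ·)) ∧
       (∀ i, ∀ x ∈ v i, 1 ≤ x ∧ x ≤ Φ i) ∧
       (∀ i i', i' < i → v i ≠ [] → v i' ≠ [] →
          (∀ m, i' < m → m < i → v m = []) → (v i').headI < (v i).getLastD 0) ∧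
       (∀ r, rowLenOf (B.out (bwordComp n α) (wordOfFactors n v)).sh r = dsort n α r) ∧
       (∀ u, wtS (B.out (bwordComp n α) (wordOfFactors n v)).sh
               (B.out (bwordComp n α) (wordOfFactors n v)).Q u =
             if 1 ≤ u ∧ u ≤ n then α (u - 1) else 0)}

/-- Interface for the Reiner–Shimozono flag compression `β ↦ β̂` (relative to a flag):
`β̂† = β†` and there is a Knuth-equivalence-preserving bijection
`ζ : 𝒲(β, Φ) → 𝒲(β̂, Φ₀)`. -/
structure RSHatData (n : ℕ) (B : BurgeData) where
  hat : (ℕ → ℕ) → (ℕ → ℕ) → (ℕ → ℕ)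
  sorted : ∀ α Φ, IsFlag n Φ → ∀ i, dsort n (hat α Φ) i = dsort n α i
  zeta : ∀ α Φ, IsFlag n Φ → (WSet n B α Φ).Nonempty →
    ∃ ζ : (ℕ → List ℕ) → (ℕ → List ℕ),
      Set.BijOn ζ (WSet n B α Φ) (WSet n B (hat α Φ) (fun i => i + 1)) ∧
      ∀ v ∈ WSet n B α Φ, KnuthEquiv (wordOfFactors n v) (wordOfFactors n (ζ v))

/-! ### Compatible tableaux for RPP -/

/-- `(q, T')` witnesses that `q.Q` is a `(λ/μ, Φ)`-compatible tableau for RPP: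
`T'` is the unique flagged RPP of shape `s` with Yamanouchi row reading word whose
Burge recording tableau (for the biword `⌊h(T'); r_{T'}⌋`) is `q.Q`; and
`ceq(q.Q) := ceq(T')`. -/
def IsCompatibleRPP (n : ℕ) (B : BurgeData) (s : Finset Cell) (Φ : ℕ → ℕ)
    (q : BurgeOut) (T' : Cell → ℕ) : Prop :=
  (IsRPPOn s T' ∧ RespectsFlagS s Φ T' ∧ IsYamanouchi (rppRowWord s T') ∧
    B.out (rppHeights s T') (rppRowWord s T') = q) ∧
  (∀ T'' : Cell → ℕ,
    (IsRPPOn s T'' ∧ RespectsFlagS s Φ T'' ∧ IsYamanouchi (rppRowWord s T'') ∧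
      (B.out (rppHeights s T'') (rppRowWord s T'')).Q = q.Q) → T'' = T')

/-!
Reverse plane partitions of a fixed shape carry an action of Bender–Knuth type (Galashin, Grinberg
and Liu): swap the letters `v + 1` and `v + 2` in every column containing exactly one of them, then
resolve the descents this creates in the rows. By Newman's lemma the result does not depend on the
order of the resolutions. The action preserves `ceq` and exchanges two coordinates of the weight,
so `g̃` is symmetric in `x`. Applied only to the columns to the left of the rightmost violation of
the ballot condition it is, after multiplication by the alternant `a_ρ`, a sign-reversing involution
in the manner of Stembridge, and hence `g̃ · a_ρ = ∑ t ^ ceq R · a_{wt R + ρ}`, summed over the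
ballot reverse plane partitions `R`, which are those with a Yamanouchi row reading word. For a
straight shape `ν` the part of this identity with `ceq = 0` reads `s_ν · a_ρ = a_{ν + ρ}`.

Since Knuth equivalence preserves Yamanouchi words, the Burge correspondence sends the biword of a
ballot `R` to a pair whose insertion tableau is the highest weight tableau of its shape, and that
shape is `wt R`. So `R` is recovered from its recording tableau alone, the compatible tableaux are
the recording tableaux of the ballot `R`, and the alternant `a_ρ` cancels.
-/

section Development

-- The definitions above prefer classical decidability; here the instances with which the library
-- lemmas about `ℕ` and `Fin` are stated take precedence again.
attribute [-instance] Classical.propDecidable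
attribute [local instance 10] Classical.propDecidable

open Relation

/-! ### Newman's lemma -/

section Newman

variable {α : Type*} {r : α → α → Prop}

theorem join_of_locally_joinable (wf : WellFounded (Function.swap r))
    (lc : ∀ a b c, r a b → r a c → Join (ReflTransGen r) b c) {a b c : α}
    (hab : ReflTransGen r a b) (hac : ReflTransGen r a c) : Join (ReflTransGen r) b c := by
  induction a using wf.induction generalizing b c with
  | _ a ih =>
    rcases hab.cases_head with rfl | ⟨b', hab', hb⟩
    · exact ⟨c, hac, .refl⟩
    rcases hac.cases_head with rfl | ⟨c', hac', hc⟩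
    · exact ⟨b, .refl, hab⟩
    obtain ⟨d, hbd, hcd⟩ := lc a b' c' hab' hac'
    obtain ⟨x, hbx, hdx⟩ := ih b' hab' hb hbd
    obtain ⟨y, hxy, hcy⟩ := ih c' hac' (hcd.trans hdx) hc
    exact ⟨y, hbx.trans hxy, hcy⟩

theorem join_of_eqvGen (wf : WellFounded (Function.swap r))
    (lc : ∀ a b c, r a b → r a c → Join (ReflTransGen r) b c) {a b : α}
    (h : EqvGen r a b) : Join (ReflTransGen r) a b := by
  have hequiv : Equivalence (Join (ReflTransGen r)) :=
    equivalence_join fun _ _ _ => join_of_locally_joinable wf lc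
  refine hequiv.eqvGen_iff.1 (h.mono fun x y hxy => ⟨y, .single hxy, .refl⟩)

theorem eqvGen_of_reflTransGen {a b : α} (h : ReflTransGen r a b) : EqvGen r a b := by
  induction h with
  | refl => exact .refl _
  | tail _ hstep ih => exact .trans _ _ _ ih (.rel _ _ hstep)

end Newman

/-! ### Two-letter tables -/

section TwoLetter

/-- Column `j` of a table filled with two letters occupies the rows `lo j ≤ i < hi j`, the smaller
letter above row `h j` and the larger one from row `h j` on. The column is mixed for the separator
`x = h j` if both letters occur in it. -/
def IsMixed (lo hi : ℕ → ℕ) (j x : ℕ) : Prop := lo j < x ∧ x < hi j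

/-- A benign two-letter table with `N` columns, encoded by its separators `h`: only the mixed
columns have to be ordered. -/
structure IsBenign (N : ℕ) (lo hi h : ℕ → ℕ) : Prop where
  lo_le : ∀ j < N, lo j ≤ h j
  le_hi : ∀ j < N, h j ≤ hi j
  mixed_anti : ∀ j k, j < k → k < N → IsMixed lo hi j (h j) → IsMixed lo hi k (h k) → h k ≤ h j

/-- A two-letter reverse plane partition with `N` columns, encoded by its separators `h`. -/
structure IsTable (N : ℕ) (lo hi h : ℕ → ℕ) : Prop where
  lo_le : ∀ j < N, lo j ≤ h j
  le_hi : ∀ j < N, h j ≤ hi j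
  antitoneOn : AntitoneOn h (Set.Iio N)

/-- Resolution of a descent between the columns `j` and `j + 1`: the columns exchange their types
(pure in the smaller letter, mixed, pure in the larger letter), mixed columns keeping their
separator. -/
def resolve (lo hi h : ℕ → ℕ) (j : ℕ) : ℕ → ℕ := fun k =>
  if k = j then (if h (j + 1) = hi (j + 1) then hi j else h (j + 1))
  else if k = j + 1 then (if h j = lo j then lo (j + 1) else h j) else h k

/-- The benign table `h'` arises from `h` by resolving one descent. -/
def Resolves (N : ℕ) (lo hi h h' : ℕ → ℕ) : Prop :=
  IsBenign N lo hi h ∧ ∃ j, j + 1 < N ∧ h j < h (j + 1) ∧ h' = resolve lo hi h j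

/-- Exchange of the two letters in all pure columns of a two-letter table. -/
def swapPure (N : ℕ) (lo hi h : ℕ → ℕ) : ℕ → ℕ := fun k =>
  if k < N then (if h k = lo k then hi k else if h k = hi k then lo k else h k) else h k

/-- The type of column `j` as a number, decreasing along a resolved table. -/
def columnRank (lo hi h : ℕ → ℕ) (j : ℕ) : ℕ :=
  if h j = hi j then 0 else if h j = lo j then 2 else 1

/-- The termination measure for resolving descents. -/
def potential (N : ℕ) (lo hi h : ℕ → ℕ) : ℕ :=
  ∑ j ∈ Finset.range N, (N - j) * columnRank lo hi h j

/-- The image of a two-letter table under the Bender–Knuth involution: swap the pure columns, then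
resolve descents until none is left. -/
def tableBK (N : ℕ) (lo hi h : ℕ → ℕ) : ℕ → ℕ :=
  if hx : ∃ u, IsTable N lo hi u ∧ ReflTransGen (Resolves N lo hi) (swapPure N lo hi h) u then
    hx.choose
  else h

/-- A column statistic `φ j x` (for the separator `x` in column `j`) whose sum over the columns is
unchanged when a descent is resolved; the three conditions correspond to the three kinds of
descents. -/
structure IsResolveInvariant (lo hi : ℕ → ℕ) (φ : ℕ → ℕ → ℕ) : Prop where
  pure_pure : ∀ j, lo j < hi (j + 1) →
    φ j (lo j) + φ (j + 1) (hi (j + 1)) = φ j (hi j) + φ (j + 1) (lo (j + 1))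
  pure_mixed : ∀ j b, IsMixed lo hi j b → IsMixed lo hi (j + 1) b →
    φ j (lo j) + φ (j + 1) b = φ j b + φ (j + 1) (lo (j + 1))
  mixed_pure : ∀ j b, IsMixed lo hi j b → IsMixed lo hi (j + 1) b →
    φ j b + φ (j + 1) (hi (j + 1)) = φ j (hi j) + φ (j + 1) b

variable {N : ℕ} {lo hi h h' : ℕ → ℕ}

theorem resolve_left (j : ℕ) :
    resolve lo hi h j j = if h (j + 1) = hi (j + 1) then hi j else h (j + 1) := by
  simp [resolve]

theorem resolve_right (j : ℕ) :
    resolve lo hi h j (j + 1) = if h j = lo j then lo (j + 1) else h j := by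
  simp [resolve]

theorem resolve_of_ne {j k : ℕ} (h₁ : k ≠ j) (h₂ : k ≠ j + 1) : resolve lo hi h j k = h k := by
  simp [resolve, h₁, h₂]

theorem IsTable.isBenign (hn : IsTable N lo hi h) : IsBenign N lo hi h :=
  ⟨hn.lo_le, hn.le_hi, fun _ _ hjk hk _ _ => hn.antitoneOn (hjk.trans hk) hk hjk.le⟩

theorem IsTable.not_resolves (hn : IsTable N lo hi h) : ¬ Resolves N lo hi h h' := by
  rintro ⟨-, j, hj, hd, -⟩
  exact hd.not_ge (hn.antitoneOn (j.lt_succ_self.trans hj) hj j.le_succ)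

theorem IsTable.eq_of_reflTransGen (hn : IsTable N lo hi h)
    (hs : ReflTransGen (Resolves N lo hi) h h') : h = h' := by
  rcases hs.cases_head with rfl | ⟨b, hb, -⟩
  · rfl
  · exact absurd hb hn.not_resolves

theorem swapPure_mixed (hv : IsBenign N lo hi h) {j : ℕ} (hj : j < N)
    (hm : IsMixed lo hi j (swapPure N lo hi h j)) :
    swapPure N lo hi h j = h j ∧ IsMixed lo hi j (h j) := by
  have := hv.lo_le j hj
  have := hv.le_hi j hj
  simp only [swapPure, IsMixed, if_pos hj] at hm ⊢
  split_ifs at hm ⊢ <;> omega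

theorem IsBenign.swapPure (hv : IsBenign N lo hi h) :
    IsBenign N lo hi (SkewG.swapPure N lo hi h) := by
  have hbounds : ∀ j < N, lo j ≤ SkewG.swapPure N lo hi h j ∧
      SkewG.swapPure N lo hi h j ≤ hi j := by
    intro j hj
    have := hv.lo_le j hj
    have := hv.le_hi j hj
    simp only [SkewG.swapPure, if_pos hj]
    split_ifs <;> omega
  refine ⟨fun j hj => (hbounds j hj).1, fun j hj => (hbounds j hj).2, ?_⟩
  intro j k hjk hk hmj hmk
  obtain ⟨ej, hj'⟩ := swapPure_mixed hv (hjk.trans hk) hmj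
  obtain ⟨ek, hk'⟩ := swapPure_mixed hv hk hmk
  rw [ej, ek]
  exact hv.mixed_anti j k hjk hk hj' hk'

theorem swapPure_swapPure (hv : IsBenign N lo hi h) :
    swapPure N lo hi (swapPure N lo hi h) = h := by
  funext k
  by_cases hk : k < N
  · have := hv.lo_le k hk
    have := hv.le_hi k hk
    simp only [swapPure, if_pos hk]
    split_ifs <;> omega
  · simp [swapPure, hk]

theorem exists_sum_range_eq_add_pair {f g : ℕ → ℕ} {j : ℕ} (hj : j + 1 < N)
    (hfg : ∀ k, k ≠ j → k ≠ j + 1 → f k = g k) :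
    ∃ S, ∑ k ∈ Finset.range N, f k = S + (f j + f (j + 1)) ∧
      ∑ k ∈ Finset.range N, g k = S + (g j + g (j + 1)) := by
  have hsub : ({j, j + 1} : Finset ℕ) ⊆ Finset.range N := by
    intro k hk
    simp only [Finset.mem_insert, Finset.mem_singleton] at hk
    exact Finset.mem_range.2 (by omega)
  have hrest : ∑ k ∈ Finset.range N \ {j, j + 1}, f k = ∑ k ∈ Finset.range N \ {j, j + 1}, g k := by
    refine Finset.sum_congr rfl fun k hk => ?_
    simp only [Finset.mem_sdiff, Finset.mem_insert, Finset.mem_singleton, not_or] at hk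
    exact hfg k hk.2.1 hk.2.2
  have hpair : ∀ p : ℕ → ℕ, ∑ k ∈ {j, j + 1}, p k = p j + p (j + 1) :=
    fun p => Finset.sum_pair j.succ_ne_self.symm
  refine ⟨∑ k ∈ Finset.range N \ {j, j + 1}, f k, ?_, ?_⟩
  · rw [← Finset.sum_sdiff hsub, hpair]
  · rw [← Finset.sum_sdiff hsub, hpair, hrest]

theorem Resolves.eq_of_ge (hs : Resolves N lo hi h h') {j : ℕ} (hj : N ≤ j) : h' j = h j := by
  obtain ⟨-, k, hk, -, rfl⟩ := hs
  exact resolve_of_ne (by omega) (by omega)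

section Antitone

variable (hlo : Antitone lo) (hhi : Antitone hi)

include hlo hhi

theorem IsBenign.descent_cases (hv : IsBenign N lo hi h) {j : ℕ} (hj : j + 1 < N)
    (hd : h j < h (j + 1)) :
    (h j = lo j ∧ h (j + 1) = hi (j + 1)) ∨
    (h j = lo j ∧ IsMixed lo hi (j + 1) (h (j + 1)) ∧ IsMixed lo hi j (h (j + 1))) ∨
    (h (j + 1) = hi (j + 1) ∧ IsMixed lo hi j (h j) ∧ IsMixed lo hi (j + 1) (h j)) := by
  have := hv.lo_le j (by omega)
  have := hv.le_hi j (by omega)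
  have := hv.lo_le (j + 1) hj
  have := hv.le_hi (j + 1) hj
  have := hv.mixed_anti j (j + 1) (by omega) hj
  have := hlo (j.le_add_right 1)
  have := hhi (j.le_add_right 1)
  unfold IsMixed at *
  omega

theorem IsBenign.resolve (hv : IsBenign N lo hi h) {j : ℕ} (hj : j + 1 < N)
    (hd : h j < h (j + 1)) : IsBenign N lo hi (SkewG.resolve lo hi h j) := by
  have hc := hv.descent_cases hlo hhi hj hd
  have := hv.lo_le j (by omega)
  have := hv.le_hi j (by omega)
  have := hv.lo_le (j + 1) hj
  have := hv.le_hi (j + 1) hj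
  have := hlo (j.le_add_right 1)
  have := hhi (j.le_add_right 1)
  refine ⟨fun k hk => ?_, fun k hk => ?_, fun k l hkl hl => ?_⟩
  · have := hv.lo_le k hk
    simp only [SkewG.resolve, IsMixed] at hc ⊢
    split_ifs <;> subst_vars <;> omega
  · have := hv.le_hi k hk
    simp only [SkewG.resolve, IsMixed] at hc ⊢
    split_ifs <;> subst_vars <;> omega
  · have := hv.mixed_anti k l hkl hl
    have := hv.mixed_anti k j
    have := hv.mixed_anti k (j + 1)
    have := hv.mixed_anti j l
    have := hv.mixed_anti (j + 1) l
    unfold SkewG.resolve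
    unfold IsMixed at *
    split_ifs <;> subst_vars <;> omega

theorem Resolves.isBenign (hs : Resolves N lo hi h h') : IsBenign N lo hi h' := by
  obtain ⟨hv, j, hj, hd, rfl⟩ := hs
  exact hv.resolve hlo hhi hj hd

-- Resolving moves rank one column to the right, where its weight in the potential is smaller.
theorem Resolves.potential_lt (hs : Resolves N lo hi h h') :
    potential N lo hi h' < potential N lo hi h := by
  obtain ⟨hv, j, hj, hd, rfl⟩ := hs
  set r := columnRank lo hi h with hr
  set r' := columnRank lo hi (resolve lo hi h j) with hr'
  have hrank : r' j < r j ∧ r' j + r' (j + 1) = r j + r (j + 1) := by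
    have hc := hv.descent_cases hlo hhi hj hd
    have := hv.lo_le j (by omega)
    have := hv.le_hi j (by omega)
    have := hv.lo_le (j + 1) hj
    have := hv.le_hi (j + 1) hj
    have := hlo (j.le_add_right 1)
    have := hhi (j.le_add_right 1)
    simp only [hr, hr', columnRank, resolve_left, resolve_right, IsMixed] at hc ⊢
    split_ifs <;> omega
  obtain ⟨S, hS, hS'⟩ := exists_sum_range_eq_add_pair (f := fun k => (N - k) * r k)
    (g := fun k => (N - k) * r' k) hj fun k h₁ h₂ => by
      simp only [hr, hr', columnRank, resolve_of_ne h₁ h₂]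
  have hweight : N - j = N - (j + 1) + 1 := by omega
  have hscaled := congrArg ((N - (j + 1)) * ·) hrank.2
  simp only [mul_add] at hscaled
  simp only [potential, ← hr, ← hr', hS, hS', hweight, add_mul, one_mul]
  omega

theorem wellFounded_resolves : WellFounded (Function.swap (Resolves N lo hi)) :=
  Subrelation.wf (fun hs => hs.potential_lt hlo hhi) (measure (potential N lo hi)).wf

theorem Resolves.sum_eq (hs : Resolves N lo hi h h') {φ : ℕ → ℕ → ℕ}
    (hφ : IsResolveInvariant lo hi φ) :
    ∑ k ∈ Finset.range N, φ k (h' k) = ∑ k ∈ Finset.range N, φ k (h k) := by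
  obtain ⟨hv, j, hj, hd, rfl⟩ := hs
  obtain ⟨S, hS, hS'⟩ := exists_sum_range_eq_add_pair (f := fun k => φ k (h k))
    (g := fun k => φ k (resolve lo hi h j k)) hj fun k h₁ h₂ => by simp only [resolve_of_ne h₁ h₂]
  rw [hS, hS', resolve_left, resolve_right]
  congr 1
  rcases hv.descent_cases hlo hhi hj hd with ⟨c₁, c₂⟩ | ⟨c₁, c₂, c₃⟩ | ⟨c₁, c₂, c₃⟩
  · rw [if_pos c₁, if_pos c₂, c₁, c₂, hφ.pure_pure j (by omega)]
  · rw [if_pos c₁, if_neg c₂.2.ne, c₁, hφ.pure_mixed j _ c₃ c₂]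
  · rw [if_pos c₁, if_neg c₂.1.ne', c₁, hφ.mixed_pure j _ c₂ c₃]

theorem sum_eq_of_reflTransGen (hs : ReflTransGen (Resolves N lo hi) h h') {φ : ℕ → ℕ → ℕ}
    (hφ : IsResolveInvariant lo hi φ) :
    ∑ k ∈ Finset.range N, φ k (h' k) = ∑ k ∈ Finset.range N, φ k (h k) := by
  induction hs with
  | refl => rfl
  | tail _ hstep ih => rw [hstep.sum_eq hlo hhi hφ, ih]

theorem Resolves.swapPure (hs : Resolves N lo hi h h') :
    Resolves N lo hi (SkewG.swapPure N lo hi h') (SkewG.swapPure N lo hi h) := by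
  have hv' := (hs.isBenign hlo hhi).swapPure
  obtain ⟨hv, j, hj, hd, rfl⟩ := hs
  have hc := hv.descent_cases hlo hhi hj hd
  have := hv.lo_le j (by omega)
  have := hv.le_hi j (by omega)
  have := hv.lo_le (j + 1) hj
  have := hv.le_hi (j + 1) hj
  have := hlo (j.le_add_right 1)
  have := hhi (j.le_add_right 1)
  have hj' : j < N := by omega
  unfold IsMixed at hc
  refine ⟨hv', j, hj, ?_, funext fun k => ?_⟩
  · simp only [SkewG.swapPure, resolve_left, resolve_right, if_pos hj, if_pos hj']
    split_ifs <;> omega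
  · rcases eq_or_ne k j with rfl | h₁
    · simp only [SkewG.swapPure, resolve_left, resolve_right, if_pos hj, if_pos hj']
      split_ifs <;> omega
    rcases eq_or_ne k (j + 1) with rfl | h₂
    · simp only [SkewG.swapPure, resolve_left, resolve_right, if_pos hj, if_pos hj']
      split_ifs <;> omega
    · simp only [resolve_of_ne h₁ h₂, SkewG.swapPure]

theorem eqvGen_swapPure (hs : EqvGen (Resolves N lo hi) h h') :
    EqvGen (Resolves N lo hi) (swapPure N lo hi h) (swapPure N lo hi h') := by
  induction hs with
  | rel x y hxy => exact .symm _ _ (.rel _ _ (hxy.swapPure hlo hhi))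
  | refl x => exact .refl _
  | symm x y _ ih => exact .symm _ _ ih
  | trans x y z _ _ ih₁ ih₂ => exact .trans _ _ _ ih₁ ih₂

theorem join_resolve_of_disjoint (hv : IsBenign N lo hi h) {j k : ℕ} (hjk : j + 1 < k)
    (hk : k + 1 < N) (hdj : h j < h (j + 1)) (hdk : h k < h (k + 1)) :
    Join (ReflTransGen (Resolves N lo hi)) (resolve lo hi h j) (resolve lo hi h k) := by
  have hj : j + 1 < N := by omega
  have hbj := hv.resolve hlo hhi hj hdj
  have hbk := hv.resolve hlo hhi hk hdk
  refine ⟨resolve lo hi (resolve lo hi h j) k, .single ⟨hbj, k, hk, ?_, rfl⟩,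
    .single ⟨hbk, j, hj, ?_, funext fun i => ?_⟩⟩
  · rwa [resolve_of_ne (by omega) (by omega), resolve_of_ne (by omega) (by omega)]
  · rwa [resolve_of_ne (by omega) (by omega), resolve_of_ne (by omega) (by omega)]
  · grind [resolve]

-- With the columns `j, j + 1, j + 2` of types `2, m, 1`, the two sides of the braid are
-- `2m1 → m21 → m12 → 1m2` and `2m1 → 21m → 12m → 1m2`.
theorem join_resolve_of_adjacent (hv : IsBenign N lo hi h) {j : ℕ} (hj : j + 1 + 1 < N)
    (hd : h j < h (j + 1)) (hd' : h (j + 1) < h (j + 1 + 1)) :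
    Join (ReflTransGen (Resolves N lo hi)) (resolve lo hi h j) (resolve lo hi h (j + 1)) := by
  have hj' : j + 1 < N := by omega
  obtain ⟨hleft, -, hmid, hright⟩ : h j = lo j ∧ lo j < h (j + 1) ∧
      h (j + 1) < hi (j + 1 + 1) ∧ h (j + 1 + 1) = hi (j + 1 + 1) := by
    have h₁ := hv.descent_cases hlo hhi hj' hd
    have h₂ := hv.descent_cases hlo hhi hj hd'
    unfold IsMixed at h₁ h₂
    omega
  have := hlo (j.le_add_right 1)
  have := hlo ((j + 1).le_add_right 1)
  have := hhi (j.le_add_right 1)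
  have := hhi ((j + 1).le_add_right 1)
  have hb₁ := hv.resolve hlo hhi hj' hd
  have hb₂ := hv.resolve hlo hhi hj hd'
  have hd₁ : resolve lo hi h j (j + 1) < resolve lo hi h j (j + 1 + 1) := by grind [resolve]
  have hd₂ : resolve lo hi h (j + 1) j < resolve lo hi h (j + 1) (j + 1) := by grind [resolve]
  have hb₁₂ := hb₁.resolve hlo hhi hj hd₁
  have hb₂₁ := hb₂.resolve hlo hhi hj' hd₂
  refine ⟨resolve lo hi (resolve lo hi (resolve lo hi h j) (j + 1)) j,
    .tail (.single ⟨hb₁, j + 1, hj, hd₁, rfl⟩) ⟨hb₁₂, j, hj', ?_, rfl⟩,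
    .tail (.single ⟨hb₂, j, hj', hd₂, rfl⟩) ⟨hb₂₁, j + 1, hj, ?_, funext fun i => ?_⟩⟩
  all_goals grind [resolve]

theorem join_of_resolves (a b c : ℕ → ℕ) (hab : Resolves N lo hi a b)
    (hac : Resolves N lo hi a c) : Join (ReflTransGen (Resolves N lo hi)) b c := by
  obtain ⟨hv, j, hj, hdj, rfl⟩ := hab
  obtain ⟨-, k, hk, hdk, rfl⟩ := hac
  wlog hjk : j ≤ k generalizing j k
  · obtain ⟨d, hd, hd'⟩ := this k hk hdk j hj hdj (by omega)
    exact ⟨d, hd', hd⟩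
  rcases hjk.eq_or_lt with rfl | hjk
  · exact ⟨_, .refl, .refl⟩
  rcases (Nat.succ_le_of_lt hjk).eq_or_lt with rfl | hjk
  · exact join_resolve_of_adjacent hlo hhi hv hk hdj hdk
  · exact join_resolve_of_disjoint hlo hhi hv hjk hk hdj hdk

theorem IsTable.eq_of_eqvGen (hn : IsTable N lo hi h) (hn' : IsTable N lo hi h')
    (hs : EqvGen (Resolves N lo hi) h h') : h = h' := by
  obtain ⟨d, hd, hd'⟩ :=
    join_of_eqvGen (wellFounded_resolves hlo hhi) (join_of_resolves hlo hhi) hs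
  rw [hn.eq_of_reflTransGen hd, hn'.eq_of_reflTransGen hd']

theorem IsBenign.exists_isTable (hv : IsBenign N lo hi h) :
    ∃ u, IsTable N lo hi u ∧ ReflTransGen (Resolves N lo hi) h u := by
  induction h using (wellFounded_resolves (N := N) hlo hhi).induction with
  | _ h ih =>
    by_cases hdesc : ∃ j, j + 1 < N ∧ h j < h (j + 1)
    · obtain ⟨j, hj, hd⟩ := hdesc
      have hs : Resolves N lo hi h (SkewG.resolve lo hi h j) := ⟨hv, j, hj, hd, rfl⟩
      obtain ⟨u, hu, hr⟩ := ih _ hs (hs.isBenign hlo hhi)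
      exact ⟨u, hu, hr.head hs⟩
    · push Not at hdesc
      exact ⟨h, ⟨hv.lo_le, hv.le_hi, antitoneOn_of_succ_le Set.ordConnected_Iio
        fun j _ _ hj => hdesc j hj⟩, .refl⟩

theorem tableBK_spec (hn : IsTable N lo hi h) :
    IsTable N lo hi (tableBK N lo hi h) ∧
      ReflTransGen (Resolves N lo hi) (swapPure N lo hi h) (tableBK N lo hi h) := by
  have hx := hn.isBenign.swapPure.exists_isTable hlo hhi
  rw [tableBK, dif_pos hx]
  exact hx.choose_spec

theorem tableBK_tableBK (hn : IsTable N lo hi h) :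
    tableBK N lo hi (tableBK N lo hi h) = h := by
  obtain ⟨hn₁, hs₁⟩ := tableBK_spec hlo hhi hn
  obtain ⟨hn₂, hs₂⟩ := tableBK_spec hlo hhi hn₁
  have hback := eqvGen_swapPure hlo hhi (eqvGen_of_reflTransGen hs₁)
  rw [swapPure_swapPure hn.isBenign] at hback
  exact hn₂.eq_of_eqvGen hlo hhi hn
    (.trans _ _ _ (.symm _ _ (eqvGen_of_reflTransGen hs₂)) (.symm _ _ hback))

theorem card_lo_lt_tableBK (hn : IsTable N lo hi h) :
    ((Finset.range N).filter fun j => lo j < tableBK N lo hi h j).card =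
      ((Finset.range N).filter fun j => h j < hi j).card := by
  have hφ : IsResolveInvariant lo hi fun j x => if lo j < x then 1 else 0 := by
    constructor <;> intro j <;> intros <;> have := hlo (j.le_add_right 1) <;>
      have := hhi (j.le_add_right 1) <;> unfold IsMixed at * <;> split_ifs <;> omega
  simp only [Finset.card_filter, sum_eq_of_reflTransGen hlo hhi (tableBK_spec hlo hhi hn).2 hφ]
  refine Finset.sum_congr rfl fun j hj => ?_
  have hj' := Finset.mem_range.1 hj
  have := hn.lo_le j hj'
  have := hn.le_hi j hj'
  simp only [swapPure, if_pos hj']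
  split_ifs <;> omega

theorem card_tableBK_lt_hi (hn : IsTable N lo hi h) :
    ((Finset.range N).filter fun j => tableBK N lo hi h j < hi j).card =
      ((Finset.range N).filter fun j => lo j < h j).card := by
  have hcard := card_lo_lt_tableBK hlo hhi (tableBK_spec hlo hhi hn).1
  rwa [tableBK_tableBK hlo hhi hn, eq_comm] at hcard

theorem card_mixed_tableBK (hn : IsTable N lo hi h) (r : ℕ) :
    ((Finset.range N).filter fun j =>
        IsMixed lo hi j (tableBK N lo hi h j) ∧ tableBK N lo hi h j = r).card =
      ((Finset.range N).filter fun j => IsMixed lo hi j (h j) ∧ h j = r).card := by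
  have hφ : IsResolveInvariant lo hi fun j x => if IsMixed lo hi j x ∧ x = r then 1 else 0 := by
    constructor <;> intro j <;> intros <;> have := hlo (j.le_add_right 1) <;>
      have := hhi (j.le_add_right 1) <;> unfold IsMixed at * <;> split_ifs <;> omega
  simp only [Finset.card_filter, sum_eq_of_reflTransGen hlo hhi (tableBK_spec hlo hhi hn).2 hφ]
  refine Finset.sum_congr rfl fun j hj => ?_
  have hj' := Finset.mem_range.1 hj
  have := hn.lo_le j hj'
  have := hn.le_hi j hj'
  unfold swapPure IsMixed
  rw [if_pos hj']
  split_ifs <;> omega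

theorem tableBK_of_ge (hn : IsTable N lo hi h) {j : ℕ} (hj : N ≤ j) :
    tableBK N lo hi h j = h j := by
  have hconst : ∀ {u}, ReflTransGen (Resolves N lo hi) (swapPure N lo hi h) u →
      u j = swapPure N lo hi h j := by
    intro u hu
    induction hu with
    | refl => rfl
    | tail _ hstep ih => rw [hstep.eq_of_ge hj, ih]
  rw [hconst (tableBK_spec hlo hhi hn).2]
  exact if_neg hj.not_gt

end Antitone

end TwoLetter

/-! ### Column heights of reverse plane partitions -/

section Heights

/-- The number of rows of column `j` above the last entry at most `v`. The cells of the inner shape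
`μ` are counted as entries `0`; they are the cells of the lower closure of `s` outside `s`. -/
def height (s : Finset Cell) (R : Cell → ℕ) (v j : ℕ) : ℕ :=
  ((Finset.range (s.sup Prod.fst + 1)).filter fun r =>
    (r, j) ∈ lowerClosure (s : Set Cell) ∧ R (r, j) ≤ v).card

/-- A strict upper bound for the column indices of `s`. -/
def colBound (s : Finset Cell) : ℕ := s.sup Prod.snd + 1

/-- The letter `v` occurs in column `j`. -/
def ColumnContains (s : Finset Cell) (R : Cell → ℕ) (v j : ℕ) : Prop :=
  ∃ i, (i, j) ∈ s ∧ R (i, j) = v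

theorem lt_card_filter_range_iff {p : ℕ → Prop} [DecidablePred p] {N : ℕ}
    (hlt : ∀ r, p r → r < N) (hanti : ∀ r r', r ≤ r' → p r' → p r) (r : ℕ) :
    r < ((Finset.range N).filter p).card ↔ p r := by
  refine ⟨fun hr => ?_, fun hr => ?_⟩
  · by_contra hp
    have hsub : (Finset.range N).filter p ⊆ Finset.range r := fun r' hr' => by
      by_contra hge
      exact hp (hanti r r' (by simpa using hge) (Finset.mem_filter.1 hr').2)
    have := Finset.card_le_card hsub
    rw [Finset.card_range] at this
    omega
  · have hsub : Finset.range (r + 1) ⊆ (Finset.range N).filter p := fun r' hr' => by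
      have hp := hanti r' r (Nat.lt_succ_iff.1 (Finset.mem_range.1 hr')) hr
      exact Finset.mem_filter.2 ⟨Finset.mem_range.2 (hlt r' hp), hp⟩
    have := Finset.card_le_card hsub
    rwa [Finset.card_range] at this

theorem fst_lt_of_mem {s : Finset Cell} {c : Cell} (hc : c ∈ s) : c.1 < s.sup Prod.fst + 1 :=
  Nat.lt_succ_of_le (Finset.le_sup (f := Prod.fst) hc)

theorem snd_lt_of_mem {s : Finset Cell} {c : Cell} (hc : c ∈ s) : c.2 < colBound s :=
  Nat.lt_succ_of_le (Finset.le_sup (f := Prod.snd) hc)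

theorem fst_lt_of_mem_lowerClosure {s : Finset Cell} {c : Cell}
    (hc : c ∈ lowerClosure (s : Set Cell)) : c.1 < s.sup Prod.fst + 1 := by
  obtain ⟨d, hd, hcd⟩ := hc
  exact hcd.1.trans_lt (fst_lt_of_mem hd)

theorem mem_lowerClosure_of_mem {s : Finset Cell} {c : Cell} (hc : c ∈ s) :
    c ∈ lowerClosure (s : Set Cell) :=
  subset_lowerClosure hc

variable {s : Finset Cell} {R R' : Cell → ℕ}

theorem IsRPPOn.mem_of_ne_zero (hR : IsRPPOn s R) {c : Cell} (hc : R c ≠ 0) : c ∈ s :=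
  by_contra fun h => hc (hR.2.1 c h)

theorem IsRPPOn.le_of_le_of_mem (hs : (s : Set Cell).OrdConnected) (hR : IsRPPOn s R)
    {i j i' j' : ℕ} (hc : (i, j) ∈ s) (hc' : (i', j') ∈ s) (hi : i ≤ i') (hj : j ≤ j') :
    R (i, j) ≤ R (i', j') := by
  have hmem : ∀ k l, i ≤ k → k ≤ i' → j ≤ l → l ≤ j' → (k, l) ∈ s := fun k l h₁ h₂ h₃ h₄ =>
    hs.out hc hc' ⟨Prod.mk_le_mk.2 ⟨h₁, h₃⟩, Prod.mk_le_mk.2 ⟨h₂, h₄⟩⟩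
  have hdown : ∀ k, i ≤ k → k ≤ i' → R (i, j) ≤ R (k, j) := by
    intro k hik
    induction k, hik using Nat.le_induction with
    | base => exact fun _ => le_rfl
    | succ k hik ih =>
      intro hk
      exact (ih (by omega)).trans (hR.2.2.2 k j (hmem k j hik (by omega) le_rfl hj)
        (hmem (k + 1) j (by omega) hk le_rfl hj))
  have hright : ∀ l, j ≤ l → l ≤ j' → R (i', j) ≤ R (i', l) := by
    intro l hjl
    induction l, hjl using Nat.le_induction with
    | base => exact fun _ => le_rfl
    | succ l hjl ih =>
      intro hl
      exact (ih (by omega)).trans (hR.2.2.1 i' l (hmem i' l hi le_rfl hjl (by omega))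
        (hmem i' (l + 1) hi le_rfl (by omega) hl))
  exact (hdown i' hi le_rfl).trans (hright j' hj le_rfl)

theorem IsRPPOn.le_of_le (hs : (s : Set Cell).OrdConnected) (hR : IsRPPOn s R) {c d : Cell}
    (hd : d ∈ lowerClosure (s : Set Cell)) (hcd : c ≤ d) : R c ≤ R d := by
  by_cases hc : c ∈ s
  · obtain ⟨e, he, hde⟩ := hd
    exact hR.le_of_le_of_mem hs hc (hs.out hc he ⟨hcd, hde⟩) hcd.1 hcd.2
  · rw [hR.2.1 c hc]
    exact Nat.zero_le _

theorem IsRPPOn.lt_height_iff (hs : (s : Set Cell).OrdConnected) (hR : IsRPPOn s R)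
    {v j r : ℕ} :
    r < height s R v j ↔ (r, j) ∈ lowerClosure (s : Set Cell) ∧ R (r, j) ≤ v := by
  rw [height]
  refine lt_card_filter_range_iff (fun r hr => fst_lt_of_mem_lowerClosure hr.1)
    (fun r r' hrr' hr' => ?_) r
  have hle : ((r, j) : Cell) ≤ (r', j) := Prod.mk_le_mk.2 ⟨hrr', le_rfl⟩
  exact ⟨(lowerClosure (s : Set Cell)).lower hle hr'.1, (hR.le_of_le hs hr'.1 hle).trans hr'.2⟩

theorem IsRPPOn.lt_height_iff_of_mem (hs : (s : Set Cell).OrdConnected) (hR : IsRPPOn s R)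
    {v j r : ℕ} (hc : (r, j) ∈ s) : r < height s R v j ↔ R (r, j) ≤ v := by
  rw [hR.lt_height_iff hs, and_iff_right (mem_lowerClosure_of_mem hc)]

theorem IsRPPOn.antitone_height (hs : (s : Set Cell).OrdConnected) (hR : IsRPPOn s R) (v : ℕ) :
    Antitone (height s R v) := by
  refine fun j j' hjj' => le_of_forall_lt fun r hr => ?_
  rw [hR.lt_height_iff hs] at hr ⊢
  have hle : ((r, j) : Cell) ≤ (r, j') := Prod.mk_le_mk.2 ⟨le_rfl, hjj'⟩
  exact ⟨(lowerClosure (s : Set Cell)).lower hle hr.1, (hR.le_of_le hs hr.1 hle).trans hr.2⟩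

theorem height_mono {v w : ℕ} (hvw : v ≤ w) (j : ℕ) : height s R v j ≤ height s R w j :=
  Finset.card_le_card (Finset.monotone_filter_right _ fun _ _ hr => ⟨hr.1, hr.2.trans hvw⟩)

theorem IsRPPOn.ext_of_height (hs : (s : Set Cell).OrdConnected) (hR : IsRPPOn s R)
    (hR' : IsRPPOn s R') (h : ∀ v, height s R v = height s R' v) : R = R' := by
  funext ⟨r, j⟩
  by_cases hc : (r, j) ∈ s
  · refine eq_of_forall_ge_iff fun v => ?_
    rw [← hR.lt_height_iff_of_mem hs hc, ← hR'.lt_height_iff_of_mem hs hc, h v]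
  · rw [hR.2.1 _ hc, hR'.2.1 _ hc]

theorem IsRPPOn.columnContains_succ_iff (hs : (s : Set Cell).OrdConnected) (hR : IsRPPOn s R)
    {v j : ℕ} : ColumnContains s R (v + 1) j ↔ height s R v j < height s R (v + 1) j := by
  constructor
  · rintro ⟨r, hr, hval⟩
    have hle : height s R v j ≤ r := not_lt.1 fun hlt => by
      have := (hR.lt_height_iff_of_mem hs hr).1 hlt
      omega
    exact hle.trans_lt ((hR.lt_height_iff_of_mem hs hr).2 hval.le)
  · intro hlt
    obtain ⟨hmem, hle⟩ := (hR.lt_height_iff hs).1 hlt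
    have hgt : ¬ R (height s R v j, j) ≤ v := fun h =>
      lt_irrefl _ ((hR.lt_height_iff hs).2 ⟨hmem, h⟩)
    have hval : R (height s R v j, j) = v + 1 := by omega
    exact ⟨height s R v j, hR.mem_of_ne_zero (by omega), hval⟩

end Heights

/-! ### Bender–Knuth involutions on reverse plane partitions -/

section BenderKnuth

/-- Refills the cells of the first `N` columns of `R` that contain `v + 1` or `v + 2`, with `h` as
the separators between the two letters. -/
def refill (N v : ℕ) (R : Cell → ℕ) (h : ℕ → ℕ) : Cell → ℕ := fun c =>
  if c.2 < N ∧ (R c = v + 1 ∨ R c = v + 2) then (if c.1 < h c.2 then v + 1 else v + 2) else R c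

/-- The Bender–Knuth involution of Galashin, Grinberg and Liu for the letters `v + 1` and `v + 2`,
applied to the first `N` columns only. -/
def benderKnuth (s : Finset Cell) (N v : ℕ) (R : Cell → ℕ) : Cell → ℕ :=
  refill N v R (tableBK N (height s R v) (height s R (v + 2)) (height s R (v + 1)))

/-- The number of columns in `A` containing the letter `v`. -/
def columnCount (s : Finset Cell) (R : Cell → ℕ) (v : ℕ) (A : Finset ℕ) : ℕ :=
  (A.filter (ColumnContains s R v)).card

variable {s : Finset Cell} {R : Cell → ℕ} {N v : ℕ}

theorem benderKnuth_of_ge {c : Cell} (hc : N ≤ c.2) : benderKnuth s N v R c = R c :=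
  if_neg fun h => hc.not_gt h.1

theorem benderKnuth_eq_iff_of_ne {c : Cell} {w : ℕ} (h₁ : w ≠ v + 1) (h₂ : w ≠ v + 2) :
    benderKnuth s N v R c = w ↔ R c = w := by
  unfold benderKnuth refill
  split_ifs <;> omega

theorem benderKnuth_eq_or_eq_iff {c : Cell} :
    benderKnuth s N v R c = v + 1 ∨ benderKnuth s N v R c = v + 2 ↔
      R c = v + 1 ∨ R c = v + 2 := by
  unfold benderKnuth refill
  split_ifs <;> omega

theorem columnContains_benderKnuth_iff_of_ne {w j : ℕ} (h₁ : w ≠ v + 1) (h₂ : w ≠ v + 2) :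
    ColumnContains s (benderKnuth s N v R) w j ↔ ColumnContains s R w j := by
  simp only [ColumnContains, benderKnuth_eq_iff_of_ne h₁ h₂]

theorem columnContains_benderKnuth_iff_of_ge {w j : ℕ} (hj : N ≤ j) :
    ColumnContains s (benderKnuth s N v R) w j ↔ ColumnContains s R w j := by
  simp only [ColumnContains, benderKnuth_of_ge (c := (_, j)) hj]

theorem ceqOn_eq_card_filter_range (r : ℕ) : ceqOn s R r =
    ((Finset.range (colBound s)).filter fun j =>
      (r, j) ∈ s ∧ (r + 1, j) ∈ s ∧ R (r, j) = R (r + 1, j)).card := by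
  refine Finset.card_bij' (fun c _ => c.2) (fun j _ => (r, j)) ?_ ?_ ?_ fun _ _ => rfl
  · rintro ⟨a, b⟩ h
    simp only [Finset.mem_filter, Finset.mem_range] at h ⊢
    obtain ⟨hmem, rfl, hrest⟩ := h
    exact ⟨snd_lt_of_mem hmem, hmem, hrest⟩
  · intro j h
    simp only [Finset.mem_filter, true_and] at h ⊢
    exact h.2
  · rintro ⟨a, b⟩ h
    simp only [Finset.mem_filter] at h
    rw [h.2.1]

section RPP

variable (hs : (s : Set Cell).OrdConnected) (hR : IsRPPOn s R)

include hs hR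

theorem IsRPPOn.isTable_height (N v : ℕ) :
    IsTable N (height s R v) (height s R (v + 2)) (height s R (v + 1)) :=
  ⟨fun j _ => height_mono (by omega) j, fun j _ => height_mono (by omega) j,
    (hR.antitone_height hs (v + 1)).antitoneOn _⟩

omit hs in
theorem IsRPPOn.refill (hN : ¬ ColumnContains s R (v + 1) N) {h : ℕ → ℕ}
    (hh : AntitoneOn h (Set.Iio N)) : IsRPPOn s (SkewG.refill N v R h) := by
  refine ⟨fun c hc => ?_, fun c hc => ?_, fun r j h₁ h₂ => ?_, fun r j h₁ h₂ => ?_⟩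
  · have := hR.1 c hc
    unfold SkewG.refill
    split_ifs <;> omega
  · have := hR.2.1 c hc
    unfold SkewG.refill
    split_ifs <;> omega
  · have hrow := hR.2.2.1 r j h₁ h₂
    have hanti : j + 1 < N → h (j + 1) ≤ h j := fun hj =>
      hh (Set.mem_Iio.2 (by omega)) hj (j.le_add_right 1)
    have hcol : j + 1 = N → R (r, j + 1) ≠ v + 1 := by
      rintro rfl hval
      exact hN ⟨r, h₂, hval⟩
    simp only [SkewG.refill]
    split_ifs <;> omega
  · have := hR.2.2.2 r j h₁ h₂
    simp only [SkewG.refill]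
    split_ifs <;> omega

theorem IsRPPOn.height_refill (hN : ¬ ColumnContains s R (v + 1) N) {h : ℕ → ℕ}
    (hh : IsTable N (height s R v) (height s R (v + 2)) h)
    (hge : ∀ j, N ≤ j → h j = height s R (v + 1) j) :
    height s (SkewG.refill N v R h) (v + 1) = h := by
  have hR' := hR.refill hN hh.antitoneOn
  funext j
  refine eq_of_forall_lt_iff fun r => ?_
  rw [hR'.lt_height_iff hs]
  by_cases hj : j < N
  · have hlo := hh.lo_le j hj
    have hhi := hh.le_hi j hj
    have h₀ := hR.lt_height_iff hs (v := v) (j := j) (r := r)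
    have h₂ := hR.lt_height_iff hs (v := v + 2) (j := j) (r := r)
    by_cases hmem : (r, j) ∈ lowerClosure (s : Set Cell)
    · simp only [hmem, true_and, SkewG.refill, hj] at h₀ h₂ ⊢
      split_ifs <;> omega
    · have hout : ¬ r < height s R (v + 2) j := fun h => hmem (h₂.1 h).1
      exact iff_of_false (fun h => hmem h.1) fun h => hout (h.trans_le hhi)
  · rw [hge j (not_lt.1 hj), hR.lt_height_iff hs]
    simp only [SkewG.refill, hj, false_and, if_false]

theorem IsRPPOn.height_refill_of_ne (hN : ¬ ColumnContains s R (v + 1) N) {h : ℕ → ℕ}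
    (hh : AntitoneOn h (Set.Iio N)) {w : ℕ} (hw : w ≠ v + 1) :
    height s (SkewG.refill N v R h) w = height s R w := by
  funext j
  refine eq_of_forall_lt_iff fun r => ?_
  rw [(hR.refill hN hh).lt_height_iff hs, hR.lt_height_iff hs]
  refine and_congr_right fun _ => ?_
  simp only [SkewG.refill]
  split_ifs <;> omega

theorem IsRPPOn.isTable_tableBK (N v : ℕ) :
    IsTable N (height s R v) (height s R (v + 2))
      (tableBK N (height s R v) (height s R (v + 2)) (height s R (v + 1))) :=
  (tableBK_spec (hR.antitone_height hs v) (hR.antitone_height hs (v + 2))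
    (hR.isTable_height hs N v)).1

theorem IsRPPOn.benderKnuth (hN : ¬ ColumnContains s R (v + 1) N) :
    IsRPPOn s (SkewG.benderKnuth s N v R) :=
  hR.refill hN (hR.isTable_tableBK hs N v).antitoneOn

theorem IsRPPOn.height_benderKnuth (hN : ¬ ColumnContains s R (v + 1) N) :
    height s (SkewG.benderKnuth s N v R) (v + 1) =
      tableBK N (height s R v) (height s R (v + 2)) (height s R (v + 1)) :=
  hR.height_refill hs hN (hR.isTable_tableBK hs N v) fun _ hj =>
    tableBK_of_ge (hR.antitone_height hs v) (hR.antitone_height hs (v + 2))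
      (hR.isTable_height hs N v) hj

theorem IsRPPOn.height_benderKnuth_of_ne (hN : ¬ ColumnContains s R (v + 1) N) {w : ℕ}
    (hw : w ≠ v + 1) : height s (SkewG.benderKnuth s N v R) w = height s R w :=
  hR.height_refill_of_ne hs hN (hR.isTable_tableBK hs N v).antitoneOn hw

theorem IsRPPOn.benderKnuth_benderKnuth (hN : ¬ ColumnContains s R (v + 1) N) :
    SkewG.benderKnuth s N v (SkewG.benderKnuth s N v R) = R := by
  have hR' := hR.benderKnuth hs hN
  have hN' : ¬ ColumnContains s (SkewG.benderKnuth s N v R) (v + 1) N := by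
    rwa [columnContains_benderKnuth_iff_of_ge le_rfl]
  refine (hR'.benderKnuth hs hN').ext_of_height hs hR fun w => ?_
  rcases eq_or_ne w (v + 1) with rfl | hw
  · rw [hR'.height_benderKnuth hs hN', hR.height_benderKnuth hs hN,
      hR.height_benderKnuth_of_ne hs hN (by omega), hR.height_benderKnuth_of_ne hs hN (by omega),
      tableBK_tableBK (hR.antitone_height hs v) (hR.antitone_height hs (v + 2))
        (hR.isTable_height hs N v)]
  · rw [hR'.height_benderKnuth_of_ne hs hN' hw, hR.height_benderKnuth_of_ne hs hN hw]

theorem IsRPPOn.columnCount_succ_eq (A : Finset ℕ) : columnCount s R (v + 1) A =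
    (A.filter fun j => height s R v j < height s R (v + 1) j).card :=
  congrArg _ (Finset.filter_congr fun _ _ => hR.columnContains_succ_iff hs)

theorem IsRPPOn.columnCount_benderKnuth_left (hN : ¬ ColumnContains s R (v + 1) N) :
    columnCount s (SkewG.benderKnuth s N v R) (v + 1) (Finset.range N) =
      columnCount s R (v + 2) (Finset.range N) := by
  rw [(hR.benderKnuth hs hN).columnCount_succ_eq hs, hR.columnCount_succ_eq hs,
    hR.height_benderKnuth hs hN, hR.height_benderKnuth_of_ne hs hN (by omega)]
  exact card_lo_lt_tableBK (hR.antitone_height hs v) (hR.antitone_height hs (v + 2))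
    (hR.isTable_height hs N v)

theorem IsRPPOn.columnCount_benderKnuth_right (hN : ¬ ColumnContains s R (v + 1) N) :
    columnCount s (SkewG.benderKnuth s N v R) (v + 2) (Finset.range N) =
      columnCount s R (v + 1) (Finset.range N) := by
  rw [(hR.benderKnuth hs hN).columnCount_succ_eq hs, hR.columnCount_succ_eq hs,
    hR.height_benderKnuth hs hN, hR.height_benderKnuth_of_ne hs hN (by omega)]
  exact card_tableBK_lt_hi (hR.antitone_height hs v) (hR.antitone_height hs (v + 2))
    (hR.isTable_height hs N v)

theorem IsRPPOn.isMixed_height_iff {r j : ℕ} :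
    IsMixed (height s R v) (height s R (v + 2)) j (height s R (v + 1) j) ∧
        height s R (v + 1) j = r + 1 ↔
      (r, j) ∈ s ∧ (r + 1, j) ∈ s ∧ R (r, j) = v + 1 ∧ R (r + 1, j) = v + 2 := by
  have h₀ := hR.lt_height_iff hs (v := v) (j := j) (r := r)
  have h₁ := hR.lt_height_iff hs (v := v + 1) (j := j) (r := r)
  have h₁' := hR.lt_height_iff hs (v := v + 1) (j := j) (r := r + 1)
  have h₂' := hR.lt_height_iff hs (v := v + 2) (j := j) (r := r + 1)
  constructor
  · rintro ⟨⟨hlo, hhi⟩, heq⟩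
    obtain ⟨hmem, hle⟩ := h₁.1 (by omega)
    obtain ⟨hmem', hle'⟩ := h₂'.1 (by omega)
    have hval : R (r, j) = v + 1 := by
      have : ¬ R (r, j) ≤ v := fun h => absurd (h₀.2 ⟨hmem, h⟩) (by omega)
      omega
    have hval' : R (r + 1, j) = v + 2 := by
      have : ¬ R (r + 1, j) ≤ v + 1 := fun h => absurd (h₁'.2 ⟨hmem', h⟩) (by omega)
      omega
    exact ⟨hR.mem_of_ne_zero (by omega), hR.mem_of_ne_zero (by omega), hval, hval'⟩
  · rintro ⟨hmem, hmem', hval, hval'⟩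
    rw [and_iff_right (mem_lowerClosure_of_mem hmem)] at h₀ h₁
    rw [and_iff_right (mem_lowerClosure_of_mem hmem')] at h₁' h₂'
    refine ⟨⟨?_, ?_⟩, ?_⟩ <;> omega

-- The right-hand side only sees which cells contain one of the letters `v + 1`, `v + 2`.
theorem IsRPPOn.ceqOn_add_card_mixed (N v r : ℕ) :
    ceqOn s R r + ((Finset.range N).filter fun j =>
        IsMixed (height s R v) (height s R (v + 2)) j (height s R (v + 1) j) ∧
          height s R (v + 1) j = r + 1).card =
      ((Finset.range (colBound s)).filter fun j => (r, j) ∈ s ∧ (r + 1, j) ∈ s ∧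
        (R (r, j) = R (r + 1, j) ∨ j < N ∧ (R (r, j) = v + 1 ∨ R (r, j) = v + 2) ∧
          (R (r + 1, j) = v + 1 ∨ R (r + 1, j) = v + 2))).card := by
  simp only [hR.isMixed_height_iff hs]
  rw [ceqOn_eq_card_filter_range, ← Finset.card_union_of_disjoint]
  · congr 1
    ext j
    have hcol := hR.2.2.2 r j
    have hlt : (r, j) ∈ s → j < colBound s := fun h => snd_lt_of_mem h
    simp only [Finset.mem_union, Finset.mem_filter, Finset.mem_range]
    constructor
    · rintro (⟨hj, hmem, hmem', heq⟩ | ⟨hj, hmem, hmem', hval, hval'⟩)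
      · exact ⟨hj, hmem, hmem', .inl heq⟩
      · exact ⟨hlt hmem, hmem, hmem', .inr ⟨hj, .inl hval, .inr hval'⟩⟩
    · rintro ⟨hj, hmem, hmem', h⟩
      have := hcol hmem hmem'
      by_cases heq : R (r, j) = R (r + 1, j)
      · exact .inl ⟨hj, hmem, hmem', heq⟩
      · exact .inr ⟨by omega, hmem, hmem', by omega, by omega⟩
  · rw [Finset.disjoint_left]
    intro j hj hj'
    simp only [Finset.mem_filter] at hj hj'
    omega

theorem IsRPPOn.ceqOn_benderKnuth (hN : ¬ ColumnContains s R (v + 1) N) :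
    ceqOn s (SkewG.benderKnuth s N v R) = ceqOn s R := by
  funext r
  have hcount := hR.ceqOn_add_card_mixed hs N v r
  have hcount' := (hR.benderKnuth hs hN).ceqOn_add_card_mixed hs N v r
  rw [hR.height_benderKnuth hs hN, hR.height_benderKnuth_of_ne hs hN (by omega),
    hR.height_benderKnuth_of_ne hs hN (by omega),
    card_mixed_tableBK (hR.antitone_height hs v) (hR.antitone_height hs (v + 2))
      (hR.isTable_height hs N v) (r + 1)] at hcount'
  refine Nat.add_right_cancel (hcount'.trans (Eq.trans (congrArg _ ?_) hcount.symm))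
  refine Finset.filter_congr fun j _ => and_congr_right fun _ => and_congr_right fun _ => ?_
  simp only [benderKnuth_eq_or_eq_iff]
  by_cases hj : j < N
  · unfold SkewG.benderKnuth SkewG.refill
    split_ifs <;> omega
  · rw [benderKnuth_of_ge (not_lt.1 hj), benderKnuth_of_ge (not_lt.1 hj)]

end RPP

end BenderKnuth

/-! ### The sign-reversing involution -/

section Ballot

/-- Reading only the columns from `j` on, more of them contain `v + 2` than `v + 1`. -/
def Violates (s : Finset Cell) (R : Cell → ℕ) (j v : ℕ) : Prop :=
  columnCount s R (v + 1) (Finset.Ico j (colBound s)) <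
    columnCount s R (v + 2) (Finset.Ico j (colBound s))

/-- The ballot condition on the columns of `R`, read from the right. -/
def IsBallot (s : Finset Cell) (R : Cell → ℕ) : Prop := ∀ j v, ¬ Violates s R j v

/-- `j` is the rightmost column from which the ballot condition is violated, and `v` the smallest
letter for which this happens. -/
structure IsFirstViolation (s : Finset Cell) (R : Cell → ℕ) (j v : ℕ) : Prop where
  violates : Violates s R j v
  not_violates_of_lt : ∀ u < v, ¬ Violates s R j u
  not_violates_of_gt : ∀ k > j, ∀ u, ¬ Violates s R k u

/-- The Bender–Knuth involution applied to the columns left of the first violation of the ballot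
condition. -/
def ballotInvolution (s : Finset Cell) (R : Cell → ℕ) : Cell → ℕ :=
  if h : ∃ p : ℕ × ℕ, IsFirstViolation s R p.1 p.2 then benderKnuth s h.choose.1 h.choose.2 R else R

variable {s : Finset Cell} {R R' : Cell → ℕ} {j v : ℕ}

theorem columnCount_congr {A : Finset ℕ} {w : ℕ}
    (h : ∀ k ∈ A, ColumnContains s R v k ↔ ColumnContains s R' w k) :
    columnCount s R v A = columnCount s R' w A :=
  congrArg _ (Finset.filter_congr h)

theorem card_filter_Ico_eq_ite_add (p : ℕ → Prop) [DecidablePred p] {a b : ℕ} (hab : a < b) :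
    ((Finset.Ico a b).filter p).card =
      (if p a then 1 else 0) + ((Finset.Ico (a + 1) b).filter p).card := by
  simp only [Finset.card_filter, Finset.sum_eq_sum_Ico_succ_bot hab]

theorem columnCount_Ico_eq_ite_add (hj : j < colBound s) :
    columnCount s R v (Finset.Ico j (colBound s)) =
      (if ColumnContains s R v j then 1 else 0) +
        columnCount s R v (Finset.Ico (j + 1) (colBound s)) :=
  card_filter_Ico_eq_ite_add _ hj

theorem wtRPP_eq_columnCount_add (hj : j ≤ colBound s) :
    wtRPP s R v =
      columnCount s R v (Finset.range j) + columnCount s R v (Finset.Ico j (colBound s)) := by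
  have htotal : wtRPP s R v = columnCount s R v (Finset.range (colBound s)) := by
    unfold wtRPP columnCount ColumnContains colBound
    congr
  rw [htotal]
  simp only [columnCount, Finset.card_filter, Finset.sum_range_add_sum_Ico _ hj]

theorem Violates.lt_colBound (h : Violates s R j v) : j < colBound s := by
  by_contra hj
  rw [Violates, Finset.Ico_eq_empty hj] at h
  exact lt_irrefl _ h

theorem exists_isFirstViolation (h : ¬ IsBallot s R) : ∃ j v, IsFirstViolation s R j v := by
  simp only [IsBallot, not_forall, not_not] at h
  obtain ⟨j, v, hv⟩ := h
  have hP : ∃ v, Violates s R (Nat.findGreatest (fun j => ∃ v, Violates s R j v) (colBound s)) v :=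
    Nat.findGreatest_spec (P := fun j => ∃ v, Violates s R j v) hv.lt_colBound.le ⟨v, hv⟩
  exact ⟨_, Nat.find hP, Nat.find_spec hP, fun u hu => Nat.find_min hP hu, fun k hk u hu =>
    Nat.findGreatest_is_greatest (P := fun j => ∃ v, Violates s R j v) hk hu.lt_colBound.le ⟨u, hu⟩⟩

theorem IsFirstViolation.unique {k u : ℕ} (h : IsFirstViolation s R j v)
    (h' : IsFirstViolation s R k u) : j = k ∧ v = u := by
  obtain rfl : j = k := le_antisymm
    (not_lt.1 fun hlt => h'.not_violates_of_gt _ hlt _ h.violates)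
    (not_lt.1 fun hlt => h.not_violates_of_gt _ hlt _ h'.violates)
  exact ⟨rfl, le_antisymm
    (not_lt.1 fun hlt => h.not_violates_of_lt _ hlt h'.violates)
    (not_lt.1 fun hlt => h'.not_violates_of_lt _ hlt h.violates)⟩

theorem IsFirstViolation.ballotInvolution_eq (h : IsFirstViolation s R j v) :
    ballotInvolution s R = benderKnuth s j v R := by
  have hex : ∃ p : ℕ × ℕ, IsFirstViolation s R p.1 p.2 := ⟨(j, v), h⟩
  obtain ⟨hj, hv⟩ := hex.choose_spec.unique h
  rw [ballotInvolution, dif_pos hex, hj, hv]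

-- The suffix from column `j + 1` satisfies the ballot condition, so one column tips the balance.
theorem IsFirstViolation.column_spec (h : IsFirstViolation s R j v) :
    ¬ ColumnContains s R (v + 1) j ∧ ColumnContains s R (v + 2) j ∧
      columnCount s R (v + 2) (Finset.Ico j (colBound s)) =
        columnCount s R (v + 1) (Finset.Ico j (colBound s)) + 1 := by
  have hviol := h.violates
  have hsucc := h.not_violates_of_gt (j + 1) j.lt_succ_self v
  simp only [Violates, columnCount_Ico_eq_ite_add hviol.lt_colBound] at hviol hsucc ⊢
  split_ifs at hviol ⊢ with hright hleft hleft
  · omega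
  · exact ⟨hleft, hright, by omega⟩
  · omega
  · omega

theorem columnCount_Ico_benderKnuth (w : ℕ) {k : ℕ} (hk : j ≤ k) :
    columnCount s (benderKnuth s j v R) w (Finset.Ico k (colBound s)) =
      columnCount s R w (Finset.Ico k (colBound s)) :=
  columnCount_congr fun _ hl =>
    columnContains_benderKnuth_iff_of_ge (hk.trans (Finset.mem_Ico.1 hl).1)

theorem IsFirstViolation.benderKnuth (h : IsFirstViolation s R j v) :
    IsFirstViolation s (SkewG.benderKnuth s j v R) j v := by
  have hiff : ∀ k ≥ j, ∀ u, Violates s (SkewG.benderKnuth s j v R) k u ↔ Violates s R k u :=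
    fun k hk u => by simp only [Violates, columnCount_Ico_benderKnuth _ hk]
  exact ⟨(hiff j le_rfl v).2 h.violates,
    fun u hu hv => h.not_violates_of_lt u hu ((hiff j le_rfl u).1 hv),
    fun k hk u hv => h.not_violates_of_gt k hk u ((hiff k (le_of_lt hk) u).1 hv)⟩

theorem IsFirstViolation.ballotInvolution_ballotInvolution (hs : (s : Set Cell).OrdConnected)
    (hR : IsRPPOn s R) (h : IsFirstViolation s R j v) :
    ballotInvolution s (ballotInvolution s R) = R := by
  rw [h.ballotInvolution_eq, h.benderKnuth.ballotInvolution_eq,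
    hR.benderKnuth_benderKnuth hs h.column_spec.1]

theorem wtRPP_benderKnuth_of_ne {N w : ℕ} (h₁ : w ≠ v + 1) (h₂ : w ≠ v + 2) :
    wtRPP s (benderKnuth s N v R) w = wtRPP s R w := by
  simp only [wtRPP_eq_columnCount_add (Nat.zero_le _), columnCount,
    columnContains_benderKnuth_iff_of_ne h₁ h₂]

theorem IsFirstViolation.wtRPP_left (hs : (s : Set Cell).OrdConnected) (hR : IsRPPOn s R)
    (h : IsFirstViolation s R j v) :
    wtRPP s (SkewG.benderKnuth s j v R) (v + 1) + 1 = wtRPP s R (v + 2) := by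
  have hcol := h.column_spec
  rw [wtRPP_eq_columnCount_add h.violates.lt_colBound.le,
    wtRPP_eq_columnCount_add h.violates.lt_colBound.le, columnCount_Ico_benderKnuth _ le_rfl,
    hR.columnCount_benderKnuth_left hs hcol.1, hcol.2.2, add_assoc]

theorem IsFirstViolation.wtRPP_right (hs : (s : Set Cell).OrdConnected) (hR : IsRPPOn s R)
    (h : IsFirstViolation s R j v) :
    wtRPP s (SkewG.benderKnuth s j v R) (v + 2) = wtRPP s R (v + 1) + 1 := by
  have hcol := h.column_spec
  rw [wtRPP_eq_columnCount_add h.violates.lt_colBound.le,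
    wtRPP_eq_columnCount_add h.violates.lt_colBound.le, columnCount_Ico_benderKnuth _ le_rfl,
    hR.columnCount_benderKnuth_right hs hcol.1, hcol.2.2, add_assoc]

theorem not_columnContains_colBound : ¬ ColumnContains s R v (colBound s) :=
  fun ⟨_, hi, _⟩ => lt_irrefl _ (snd_lt_of_mem hi)

theorem IsRPPOn.wtRPP_benderKnuth_left (hs : (s : Set Cell).OrdConnected) (hR : IsRPPOn s R) :
    wtRPP s (SkewG.benderKnuth s (colBound s) v R) (v + 1) = wtRPP s R (v + 2) := by
  simp only [wtRPP_eq_columnCount_add le_rfl,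
    hR.columnCount_benderKnuth_left hs not_columnContains_colBound, Finset.Ico_self]
  rfl

theorem IsRPPOn.wtRPP_benderKnuth_right (hs : (s : Set Cell).OrdConnected) (hR : IsRPPOn s R) :
    wtRPP s (SkewG.benderKnuth s (colBound s) v R) (v + 2) = wtRPP s R (v + 1) := by
  simp only [wtRPP_eq_columnCount_add le_rfl,
    hR.columnCount_benderKnuth_right hs not_columnContains_colBound, Finset.Ico_self]
  rfl

end Ballot

/-! ### Alternants and symmetric polynomials -/

section Alternant

open MvPolynomial

variable {K : Type*} [CommRing K] {n : ℕ}

/-- The alternant `det (X_i ^ a_j)`. -/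
def alternant (K : Type*) [CommRing K] {n : ℕ} (a : Fin n → ℕ) : MvPolynomial (Fin n) K :=
  (Matrix.of fun i j => (X i ^ a j : MvPolynomial (Fin n) K)).det

/-- The staircase exponent `ρ = (n - 1, …, 1, 0)`. -/
def staircase (n : ℕ) : Fin n → ℕ := fun j => j.rev

theorem alternant_comp_perm (a : Fin n → ℕ) (σ : Equiv.Perm (Fin n)) :
    alternant K (a ∘ σ) = ((σ.sign : ℤ) : MvPolynomial (Fin n) K) * alternant K a :=
  Matrix.det_permute' σ (Matrix.of fun i j => (X i ^ a j : MvPolynomial (Fin n) K))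

theorem alternant_comp_swap (a : Fin n → ℕ) {i j : Fin n} (hij : i ≠ j) :
    alternant K (a ∘ Equiv.swap i j) = -alternant K a := by
  rw [alternant_comp_perm, Equiv.Perm.sign_swap hij, Units.val_neg, Units.val_one, Int.cast_neg,
    Int.cast_one, neg_one_mul]

theorem alternant_eq_zero {a : Fin n → ℕ} {i j : Fin n} (hij : i ≠ j) (h : a i = a j) :
    alternant K a = 0 :=
  Matrix.det_zero_of_column_eq hij fun _ => by rw [Matrix.of_apply, Matrix.of_apply, h]

theorem alternant_staircase_ne_zero [IsDomain K] : alternant K (staircase n) ≠ 0 := by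
  have hvand : alternant K (Fin.val : Fin n → ℕ) ≠ 0 :=
    Matrix.det_vandermonde_ne_zero_iff.2 X_injective
  have hrev : (Fin.val : Fin n → ℕ) = staircase n ∘ Fin.revPerm :=
    funext fun j => congrArg Fin.val j.rev_rev.symm
  rw [hrev, alternant_comp_perm] at hvand
  exact right_ne_zero_of_mul hvand

theorem isSymmetric_of_rename_swap {F : MvPolynomial (Fin n) K}
    (h : ∀ i j : Fin n, (j : ℕ) = i + 1 → rename (Equiv.swap i j) F = F) : F.IsSymmetric := by
  intro σ
  cases n with
  | zero => rw [Subsingleton.elim σ 1]; exact rename_id_apply F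
  | succ n =>
    have hσ : σ ∈ Submonoid.closure (Set.range fun i : Fin n => Equiv.swap i.castSucc i.succ) := by
      rw [Equiv.Perm.mclosure_swap_castSucc_succ]
      exact Submonoid.mem_top σ
    induction hσ using Submonoid.closure_induction with
    | mem x hx =>
      obtain ⟨i, rfl⟩ := hx
      exact h _ _ (by simp)
    | one => exact rename_id_apply F
    | mul x y _ _ hx hy => rw [Equiv.Perm.coe_mul, ← rename_rename, hy, hx]

-- Symmetry allows to permute the variables of `F` separately in each term of the determinant.
theorem sum_mul_alternant_of_isSymmetric {ι : Type*} {t : Finset ι} {c : ι → K}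
    {w : ι → Fin n → ℕ} (hsymm : (∑ r ∈ t, C (c r) * ∏ k, X k ^ w r k).IsSymmetric)
    (a : Fin n → ℕ) :
    (∑ r ∈ t, C (c r) * ∏ k, X k ^ w r k) * alternant K a =
      ∑ r ∈ t, C (c r) * alternant K (w r + a) := by
  simp only [alternant, Matrix.det_apply, Matrix.of_apply, Finset.mul_sum]
  rw [Finset.sum_comm]
  refine Finset.sum_congr rfl fun σ _ => ?_
  rw [← hsymm σ, map_sum, Finset.sum_mul]
  refine Finset.sum_congr rfl fun r _ => ?_
  simp only [map_mul, rename_C, map_prod, map_pow, rename_X, Pi.add_apply, pow_add,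
    Finset.prod_mul_distrib]
  rw [mul_assoc, mul_smul_comm]

end Alternant

/-! ### The alternant expansion of the generating function -/

section AlternantExpansion

open MvPolynomial

theorem finite_setOf_isRPPOn_le (s : Finset Cell) (n : ℕ) :
    {R : Cell → ℕ | IsRPPOn s R ∧ ∀ c ∈ s, R c ≤ n}.Finite := by
  refine (Set.finite_range fun (f : s → Fin (n + 1)) (c : Cell) =>
    if h : c ∈ s then (f ⟨c, h⟩ : ℕ) else 0).subset ?_
  rintro R ⟨hR, hn⟩
  refine ⟨fun c => ⟨R c, Nat.lt_succ_of_le (hn c c.2)⟩, funext fun c => ?_⟩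
  by_cases hc : c ∈ s
  · exact dif_pos hc
  · exact (dif_neg hc).trans (hR.2.1 c hc).symm

/-- The set `RPP_n(s)`. -/
def rppFinset (s : Finset Cell) (n : ℕ) : Finset (Cell → ℕ) :=
  (finite_setOf_isRPPOn_le s n).toFinset

/-- The weight of `R` with entries at most `n`; letters start at `1` and coordinates at `0`. -/
def weight (n : ℕ) (s : Finset Cell) (R : Cell → ℕ) : Fin n → ℕ := fun k => wtRPP s R (k + 1)

/-- The generating function of `RPP_n(s)` with arbitrary coefficients depending on `ceq`. -/
def rppSum {K : Type*} [CommRing K] (s : Finset Cell) (n : ℕ) (f : (ℕ → ℕ) → K) :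
    MvPolynomial (Fin n) K :=
  ∑ R ∈ rppFinset s n, C (f (ceqOn s R)) * ∏ k, X k ^ weight n s R k

variable {K : Type*} [CommRing K] {s : Finset Cell} {R : Cell → ℕ} {n : ℕ}

theorem mem_rppFinset : R ∈ rppFinset s n ↔ IsRPPOn s R ∧ ∀ c ∈ s, R c ≤ n :=
  Set.Finite.mem_toFinset _

theorem eq_comp_swap {a b : Fin n → ℕ} {i j : Fin n} (hi : b i = a j) (hj : b j = a i)
    (h : ∀ k, k ≠ i → k ≠ j → b k = a k) : b = a ∘ Equiv.swap i j := by
  funext k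
  rw [Function.comp_apply, Equiv.swap_apply_def]
  split_ifs with h₁ h₂
  · rw [h₁, hi]
  · rw [h₂, hj]
  · exact h k h₁ h₂

theorem weight_benderKnuth_of_ne {i j k : Fin n} (hij : (j : ℕ) = i + 1) (hi : k ≠ i) (hj : k ≠ j)
    (N : ℕ) : weight n s (benderKnuth s N i R) k = weight n s R k :=
  wtRPP_benderKnuth_of_ne (by omega) (by omega)

section OrdConnected

variable (hs : (s : Set Cell).OrdConnected)

include hs

theorem benderKnuth_mem_rppFinset (hR : R ∈ rppFinset s n) {N v : ℕ} (hv : v + 1 < n)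
    (hN : ¬ ColumnContains s R (v + 1) N) : benderKnuth s N v R ∈ rppFinset s n := by
  obtain ⟨hR, hn⟩ := mem_rppFinset.1 hR
  refine mem_rppFinset.2 ⟨hR.benderKnuth hs hN, fun c hc => ?_⟩
  have := hn c hc
  unfold benderKnuth refill
  split_ifs <;> omega

theorem weight_benderKnuth (hR : IsRPPOn s R) {i j : Fin n} (hij : (j : ℕ) = i + 1) :
    weight n s (benderKnuth s (colBound s) i R) = weight n s R ∘ Equiv.swap i j := by
  refine eq_comp_swap ?_ ?_ fun k hi hj => weight_benderKnuth_of_ne hij hi hj _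
  · rw [weight, weight, hij]
    exact hR.wtRPP_benderKnuth_left hs
  · rw [weight, weight, hij]
    exact hR.wtRPP_benderKnuth_right hs

theorem isSymmetric_rppSum (n : ℕ) (f : (ℕ → ℕ) → K) : (rppSum s n f).IsSymmetric := by
  refine isSymmetric_of_rename_swap fun i j hij => ?_
  have hmem : ∀ R ∈ rppFinset s n, benderKnuth s (colBound s) i R ∈ rppFinset s n := fun R hR =>
    benderKnuth_mem_rppFinset hs hR (by omega) not_columnContains_colBound
  have hinv : ∀ R ∈ rppFinset s n,
      benderKnuth s (colBound s) i (benderKnuth s (colBound s) i R) = R := fun R hR =>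
    (mem_rppFinset.1 hR).1.benderKnuth_benderKnuth hs not_columnContains_colBound
  simp only [rppSum, map_sum, map_mul, rename_C, map_prod, map_pow, rename_X]
  refine Finset.sum_nbij' _ _ hmem hmem hinv hinv fun R hR => ?_
  have hR := (mem_rppFinset.1 hR).1
  rw [hR.ceqOn_benderKnuth hs not_columnContains_colBound, weight_benderKnuth hs hR hij,
    ← Equiv.prod_comp (Equiv.swap i j)]
  simp only [Function.comp_apply, Equiv.swap_apply_self]

omit hs in
theorem IsFirstViolation.succ_lt {j v : ℕ} (hR : R ∈ rppFinset s n)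
    (h : IsFirstViolation s R j v) : v + 1 < n := by
  obtain ⟨i, hi, hval⟩ := h.column_spec.2.1
  have := (mem_rppFinset.1 hR).2 _ hi
  omega

theorem IsFirstViolation.weight_add_staircase {k : ℕ} {i j : Fin n} (hR : IsRPPOn s R)
    (hij : (j : ℕ) = i + 1) (h : IsFirstViolation s R k i) :
    weight n s (SkewG.benderKnuth s k i R) + staircase n =
      (weight n s R + staircase n) ∘ Equiv.swap i j := by
  have hrev : (i.rev : ℕ) = j.rev + 1 := by
    rw [Fin.val_rev, Fin.val_rev]
    omega
  have hleft := h.wtRPP_left hs hR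
  have hright := h.wtRPP_right hs hR
  refine eq_comp_swap ?_ ?_ fun l hi hj => ?_
  · simp only [Pi.add_apply, weight, staircase, hrev, hij, add_assoc, one_add_one_eq_two]
    omega
  · simp only [Pi.add_apply, weight, staircase, hrev, hij, add_assoc, one_add_one_eq_two]
    omega
  · rw [Pi.add_apply, Pi.add_apply, weight_benderKnuth_of_ne hij hi hj]

theorem exists_weight_ballotInvolution_eq_comp_swap (hR : R ∈ rppFinset s n)
    (hb : ¬ IsBallot s R) :
    ∃ i j : Fin n, i ≠ j ∧ weight n s (ballotInvolution s R) + staircase n =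
      (weight n s R + staircase n) ∘ Equiv.swap i j := by
  obtain ⟨k, v, h⟩ := exists_isFirstViolation hb
  have hv := h.succ_lt hR
  refine ⟨⟨v, by omega⟩, ⟨v + 1, hv⟩, fun heq => v.succ_ne_self (congrArg Fin.val heq).symm, ?_⟩
  rw [h.ballotInvolution_eq]
  exact IsFirstViolation.weight_add_staircase (i := ⟨v, by omega⟩) (j := ⟨v + 1, hv⟩) hs
    (mem_rppFinset.1 hR).1 rfl h

theorem ballotInvolution_mem (hR : R ∈ rppFinset s n) (hb : ¬ IsBallot s R) :
    ballotInvolution s R ∈ rppFinset s n ∧ ¬ IsBallot s (ballotInvolution s R) := by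
  obtain ⟨k, v, h⟩ := exists_isFirstViolation hb
  rw [h.ballotInvolution_eq]
  exact ⟨benderKnuth_mem_rppFinset hs hR (h.succ_lt hR) h.column_spec.1,
    fun hb' => hb' _ _ h.benderKnuth.violates⟩

theorem ceqOn_ballotInvolution (hR : IsRPPOn s R) (hb : ¬ IsBallot s R) :
    ceqOn s (ballotInvolution s R) = ceqOn s R := by
  obtain ⟨k, v, h⟩ := exists_isFirstViolation hb
  rw [h.ballotInvolution_eq, hR.ceqOn_benderKnuth hs h.column_spec.1]

theorem sum_not_isBallot_eq_zero (n : ℕ) (f : (ℕ → ℕ) → K) :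
    ∑ R ∈ (rppFinset s n).filter fun R => ¬ IsBallot s R,
      C (f (ceqOn s R)) * alternant K (weight n s R + staircase n) = 0 := by
  refine Finset.sum_involution (fun R _ => ballotInvolution s R) ?_ ?_ ?_ ?_ <;> intro R hR <;>
    obtain ⟨hR, hb⟩ := Finset.mem_filter.1 hR
  · obtain ⟨i, j, hij, hswap⟩ := exists_weight_ballotInvolution_eq_comp_swap hs hR hb
    rw [hswap, alternant_comp_swap _ hij, ceqOn_ballotInvolution hs (mem_rppFinset.1 hR).1 hb,
      mul_neg, add_neg_cancel]
  · obtain ⟨i, j, hij, hswap⟩ := exists_weight_ballotInvolution_eq_comp_swap hs hR hb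
    refine fun hne hfix => hne ?_
    rw [hfix] at hswap
    have heq := congrFun hswap i
    rw [Function.comp_apply, Equiv.swap_apply_left] at heq
    rw [alternant_eq_zero hij heq, mul_zero]
  · exact Finset.mem_filter.2 (ballotInvolution_mem hs hR hb)
  · obtain ⟨k, v, h⟩ := exists_isFirstViolation hb
    exact h.ballotInvolution_ballotInvolution hs (mem_rppFinset.1 hR).1

theorem rppSum_mul_alternant_staircase (n : ℕ) (f : (ℕ → ℕ) → K) :
    rppSum s n f * alternant K (staircase n) =
      ∑ R ∈ (rppFinset s n).filter (IsBallot s),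
        C (f (ceqOn s R)) * alternant K (weight n s R + staircase n) := by
  rw [rppSum, sum_mul_alternant_of_isSymmetric (isSymmetric_rppSum hs n f),
    ← Finset.sum_filter_add_sum_filter_not _ (IsBallot s), sum_not_isBallot_eq_zero hs, add_zero]

end OrdConnected

end AlternantExpansion

/-! ### Row reading words -/

section ReadingWord

/-- The strict order in which the row reading word visits the cells. -/
def Before (c d : Cell) : Prop := d.1 < c.1 ∨ c.1 = d.1 ∧ c.2 < d.2

instance : IsStrictOrder Cell Before where
  irrefl c h := by unfold Before at h; omega
  trans c d e h h' := by unfold Before at *; omega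

/-- The cells whose entries are kept by the row reading word. -/
def IsRetained (s : Finset Cell) (R : Cell → ℕ) (c : Cell) : Prop :=
  c ∈ s ∧ ((c.1 + 1, c.2) ∉ s ∨ R (c.1 + 1, c.2) ≠ R c)

/-- The retained cells of row `i`, from left to right. -/
def retainedRow (s : Finset Cell) (R : Cell → ℕ) (i : ℕ) : List Cell :=
  ((rowList s i).filter fun j => decide ((i + 1, j) ∉ s ∨ R (i + 1, j) ≠ R (i, j))).map
    fun j => (i, j)

/-- The retained cells in the order of the row reading word. -/
def retainedCells (s : Finset Cell) (R : Cell → ℕ) : List Cell :=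
  ((List.range (s.sup Prod.fst + 1)).reverse.map (retainedRow s R)).flatten

/-- The lowest entry at most `v` in column `j`; it is the retained `v` if the column contains `v`,
and the row index is a truncated difference otherwise. -/
def lastCell (s : Finset Cell) (R : Cell → ℕ) (v j : ℕ) : Cell := (height s R v j - 1, j)

/-- The number of columns in `A` whose retained `v` satisfies `p`. -/
def retainedCount (s : Finset Cell) (R : Cell → ℕ) (p : Cell → Prop) (v : ℕ) (A : Finset ℕ) : ℕ :=
  (A.filter fun j => ColumnContains s R v j ∧ p (lastCell s R v j)).card

theorem exists_filter_eq_drop {α : Type*} {r : α → α → Prop} {L : List α} (hL : L.Pairwise r)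
    {p : α → Prop} (hp : ∀ a b, r a b → p a → p b) : ∃ k, L.filter p = L.drop k := by
  induction L with
  | nil => exact ⟨0, rfl⟩
  | cons a L ih =>
    rw [List.pairwise_cons] at hL
    by_cases ha : p a
    · refine ⟨0, List.filter_eq_self.2 fun b hb => decide_eq_true ?_⟩
      rcases List.mem_cons.1 hb with rfl | hb
      · exact ha
      · exact hp a b (hL.1 b hb) ha
    · obtain ⟨k, hk⟩ := ih hL.2
      refine ⟨k + 1, ?_⟩
      rw [List.filter_cons_of_neg (by simpa using ha), hk, List.drop_succ_cons]

theorem exists_drop_eq_filter {α : Type*} {r : α → α → Prop} [IsStrictOrder α r] {L : List α}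
    (hL : L.Pairwise r) (k : ℕ) :
    ∃ p : α → Prop, (∀ a b, r a b → p a → p b) ∧ L.drop k = L.filter p := by
  rw [← List.take_append_drop k L, List.pairwise_append] at hL
  obtain ⟨p, hp⟩ : ∃ p : α → Prop, ∀ d, p d ↔ ∀ c ∈ L.take k, r c d := ⟨_, fun _ => Iff.rfl⟩
  have htake : (L.take k).filter p = [] :=
    List.filter_eq_nil_iff.2 fun d hd hpd => irrefl d ((hp d).1 (of_decide_eq_true hpd) d hd)
  have hdrop : (L.drop k).filter p = L.drop k :=
    List.filter_eq_self.2 fun d hd => decide_eq_true ((hp d).2 fun c hc => hL.2.2 c hc d hd)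
  refine ⟨p, fun a b hab ha => (hp b).2 fun c hc => _root_.trans ((hp a).1 ha c hc) hab, ?_⟩
  calc L.drop k = (L.take k).filter p ++ (L.drop k).filter p := by
        rw [htake, hdrop, List.nil_append]
    _ = L.filter p := by rw [← List.filter_append, List.take_append_drop]

theorem forall_drop_iff_forall_filter {α : Type*} {r : α → α → Prop} [IsStrictOrder α r]
    {L : List α} (hL : L.Pairwise r) {P : List α → Prop} :
    (∀ k, P (L.drop k)) ↔ ∀ p : α → Prop, (∀ a b, r a b → p a → p b) → P (L.filter p) := by
  constructor
  · intro h p hp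
    obtain ⟨k, hk⟩ := exists_filter_eq_drop hL hp
    exact hk ▸ h k
  · intro h k
    obtain ⟨p, hp, hk⟩ := exists_drop_eq_filter hL k
    exact hk ▸ h p hp

variable {s : Finset Cell} {R : Cell → ℕ} {v : ℕ}

theorem mem_rowList {i j : ℕ} : j ∈ rowList s i ↔ (i, j) ∈ s := by
  simp only [rowList, List.mem_filter, List.mem_range, decide_eq_true_eq]
  exact and_iff_right_of_imp snd_lt_of_mem

theorem pairwise_rowList (s : Finset Cell) (i : ℕ) : (rowList s i).Pairwise (· < ·) :=
  List.pairwise_lt_range.filter _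

theorem mem_retainedRow {i : ℕ} {c : Cell} :
    c ∈ retainedRow s R i ↔ IsRetained s R c ∧ c.1 = i := by
  obtain ⟨a, b⟩ := c
  simp only [retainedRow, IsRetained, List.mem_map, List.mem_filter, mem_rowList,
    decide_eq_true_eq, Prod.mk.injEq]
  constructor
  · rintro ⟨j, hj, rfl, rfl⟩
    exact ⟨hj, rfl⟩
  · rintro ⟨hb, rfl⟩
    exact ⟨b, hb, rfl, rfl⟩

theorem mem_retainedCells {c : Cell} : c ∈ retainedCells s R ↔ IsRetained s R c := by
  simp only [retainedCells, List.mem_flatten, List.mem_map, List.mem_reverse, List.mem_range]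
  constructor
  · rintro ⟨_, ⟨i, _, rfl⟩, hc⟩
    exact (mem_retainedRow.1 hc).1
  · exact fun hc => ⟨_, ⟨c.1, fst_lt_of_mem hc.1, rfl⟩, mem_retainedRow.2 ⟨hc, rfl⟩⟩

theorem pairwise_retainedCells (s : Finset Cell) (R : Cell → ℕ) :
    (retainedCells s R).Pairwise Before := by
  refine List.pairwise_flatten.2 ⟨fun l hl => ?_, ?_⟩
  · obtain ⟨i, _, rfl⟩ := List.mem_map.1 hl
    rw [retainedRow, List.pairwise_map]
    exact ((pairwise_rowList s i).filter _).imp fun hlt => .inr ⟨rfl, hlt⟩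
  · rw [List.pairwise_map, List.pairwise_reverse]
    refine List.pairwise_lt_range.imp fun hlt c hc d hd => .inl ?_
    rwa [(mem_retainedRow.1 hc).2, (mem_retainedRow.1 hd).2]

theorem nodup_retainedCells (s : Finset Cell) (R : Cell → ℕ) : (retainedCells s R).Nodup :=
  (pairwise_retainedCells s R).imp fun h => ne_of_irrefl h

theorem rppRowWord_eq_map (s : Finset Cell) (R : Cell → ℕ) :
    rppRowWord s R = (retainedCells s R).map R := by
  rw [rppRowWord, retainedCells, List.map_flatten, List.map_map]
  congr 1
  refine List.map_congr_left fun i _ => ?_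
  rw [Function.comp_apply, retainedRow, List.map_map]
  congr
  funext j
  exact decide_eq_decide.2 Iff.rfl

theorem rppHeights_eq_map (s : Finset Cell) (R : Cell → ℕ) :
    rppHeights s R = (retainedCells s R).map fun c => c.1 + 1 := by
  rw [rppHeights, retainedCells, List.map_flatten, List.map_map]
  congr 1
  refine List.map_congr_left fun i _ => ?_
  rw [Function.comp_apply, retainedRow, List.map_map]
  congr
  funext j
  exact decide_eq_decide.2 Iff.rfl

theorem isYamanouchi_iff {w : List ℕ} :
    IsYamanouchi w ↔ ∀ k v, (w.drop k).count (v + 2) ≤ (w.drop k).count (v + 1) := by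
  have hdec : (fun a b : ℕ => Classical.propDecidable (a = b)) = instDecidableEqNat :=
    Subsingleton.elim _ _
  rw [IsYamanouchi, hdec]

section RPP

variable (hs : (s : Set Cell).OrdConnected) (hR : IsRPPOn s R)

include hs hR

theorem IsRPPOn.isRetained_and_eq_iff {c : Cell} : IsRetained s R c ∧ R c = v + 1 ↔
    ColumnContains s R (v + 1) c.2 ∧ c = lastCell s R (v + 1) c.2 := by
  obtain ⟨r, j⟩ := c
  simp only [IsRetained, hR.columnContains_succ_iff hs, lastCell, Prod.mk.injEq, and_true]
  constructor
  · rintro ⟨⟨hmem, hret⟩, hval⟩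
    have hlt := (hR.lt_height_iff_of_mem hs hmem).2 hval.le
    have hge : ¬ r < height s R v j := fun h => by
      have := (hR.lt_height_iff_of_mem hs hmem).1 h
      omega
    have hlast : ¬ r + 1 < height s R (v + 1) j := fun h => by
      obtain ⟨hmem', hle⟩ := (hR.lt_height_iff hs).1 h
      have := hR.le_of_le hs hmem' (Prod.mk_le_mk.2 ⟨r.le_succ, le_rfl⟩ : ((r, j) : Cell) ≤ _)
      have hmem' : (r + 1, j) ∈ s := hR.mem_of_ne_zero (by omega)
      rcases hret with hret | hret
      · exact hret hmem'
      · exact hret (by omega)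
    omega
  · rintro ⟨hlt, rfl⟩
    set r := height s R (v + 1) j - 1
    obtain ⟨hmem, hle⟩ := (hR.lt_height_iff hs).1 (show r < height s R (v + 1) j by omega)
    have hgt : ¬ R (r, j) ≤ v := fun h => by
      have := (hR.lt_height_iff hs).2 ⟨hmem, h⟩
      omega
    have hval : R (r, j) = v + 1 := by omega
    refine ⟨⟨hR.mem_of_ne_zero (by omega), or_iff_not_imp_left.2 fun hmem' heq => ?_⟩, hval⟩
    have := (hR.lt_height_iff_of_mem hs (not_not.1 hmem')).2 (heq.trans hval).le
    omega

theorem IsRPPOn.count_map_filter_retainedCells (p : Cell → Prop) (v : ℕ) :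
    (((retainedCells s R).filter p).map R).count (v + 1) =
      retainedCount s R p (v + 1) (Finset.range (colBound s)) := by
  have hcount : (((retainedCells s R).filter p).map R).count (v + 1) =
      ((retainedCells s R).filter fun c => p c ∧ R c = v + 1).toFinset.card := by
    rw [List.toFinset_card_of_nodup ((nodup_retainedCells s R).filter _), List.count,
      List.countP_map, List.countP_eq_length_filter, List.filter_filter]
    refine congrArg _ (List.filter_congr fun c _ => ?_)
    rw [Bool.decide_and, Bool.and_comm]
    rfl
  rw [hcount, retainedCount]
  refine Finset.card_bij' (fun c _ => c.2) (fun j _ => lastCell s R (v + 1) j) ?_ ?_ ?_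
    fun _ _ => rfl <;> intro c hc <;>
    simp only [List.mem_toFinset, List.mem_filter, mem_retainedCells, decide_eq_true_eq,
      Finset.mem_filter, Finset.mem_range] at hc ⊢
  · obtain ⟨hcol, heq⟩ := (hR.isRetained_and_eq_iff hs).1 ⟨hc.1, hc.2.2⟩
    exact ⟨snd_lt_of_mem hc.1.1, hcol, heq ▸ hc.2.1⟩
  · obtain ⟨hret, hval⟩ := (hR.isRetained_and_eq_iff hs (c := lastCell s R (v + 1) c)).2
      ⟨hc.2.1, rfl⟩
    exact ⟨hret, hc.2.2, hval⟩
  · exact ((hR.isRetained_and_eq_iff hs).1 ⟨hc.1, hc.2.2⟩).2.symm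

theorem IsRPPOn.count_rppRowWord (v : ℕ) :
    (rppRowWord s R).count (v + 1) = wtRPP s R (v + 1) := by
  have hcount := hR.count_map_filter_retainedCells hs (fun _ => True) v
  simp only [decide_true, List.filter_true, ← rppRowWord_eq_map] at hcount
  rw [hcount, wtRPP_eq_columnCount_add le_rfl, Finset.Ico_self]
  simp only [retainedCount, and_true]
  rfl

theorem IsRPPOn.height_eq_of_not_columnContains {j : ℕ} (h : ¬ ColumnContains s R (v + 1) j) :
    height s R (v + 1) j = height s R v j :=
  le_antisymm (not_lt.1 fun hlt => h ((hR.columnContains_succ_iff hs).2 hlt))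
    (height_mono v.le_succ j)

omit hs hR in
theorem before_lastCell {u w j k : ℕ} (hjk : j < k) (h : height s R w k ≤ height s R u j) :
    Before (lastCell s R u j) (lastCell s R w k) := by
  simp only [Before, lastCell]
  omega

theorem IsRPPOn.before_lastCell_succ {j : ℕ} (h₁ : ColumnContains s R (v + 1) j)
    (h₂ : ColumnContains s R (v + 2) j) :
    Before (lastCell s R (v + 2) j) (lastCell s R (v + 1) j) := by
  have hlt₁ : height s R v j < height s R (v + 1) j := (hR.columnContains_succ_iff hs).1 h₁
  have hlt₂ : height s R (v + 1) j < height s R (v + 2) j := (hR.columnContains_succ_iff hs).1 h₂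
  simp only [Before, lastCell]
  omega

-- The suffix after the last `v + 1` of column `j` contains exactly those letters `v + 1`, and all
-- those letters `v + 2`, which lie to the right of column `j`.
theorem IsRPPOn.not_violates_succ_of_pure {j : ℕ}
    (h : ∀ p : Cell → Prop, (∀ c d, Before c d → p c → p d) →
      retainedCount s R p (v + 2) (Finset.range (colBound s)) ≤
        retainedCount s R p (v + 1) (Finset.range (colBound s)))
    (hj : ¬ ColumnContains s R (v + 2) j) : ¬ Violates s R (j + 1) v := by
  have hsuffix := h (Before (lastCell s R (v + 1) j)) fun _ _ hcd hc => _root_.trans hc hcd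
  refine not_lt.2 ((Finset.card_le_card fun k hk => ?_).trans
    (hsuffix.trans (Finset.card_le_card fun k hk => ?_)))
  · simp only [Finset.mem_filter, Finset.mem_Ico, Finset.mem_range] at hk ⊢
    refine ⟨hk.1.2, hk.2, before_lastCell hk.1.1 ?_⟩
    rw [← hR.height_eq_of_not_columnContains hs hj]
    exact hR.antitone_height hs _ (by omega)
  · simp only [Finset.mem_filter, Finset.mem_Ico, Finset.mem_range] at hk ⊢
    refine ⟨⟨not_lt.1 fun hkj => ?_, hk.1⟩, hk.2.1⟩
    rcases (Nat.lt_succ_iff.1 hkj).eq_or_lt with rfl | hkj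
    · exact irrefl _ hk.2.2
    · exact asymm hk.2.2 (before_lastCell hkj (hR.antitone_height hs _ hkj.le))

theorem IsRPPOn.not_violates_of_retainedCount_le
    (h : ∀ p : Cell → Prop, (∀ c d, Before c d → p c → p d) →
      retainedCount s R p (v + 2) (Finset.range (colBound s)) ≤
        retainedCount s R p (v + 1) (Finset.range (colBound s))) (j : ℕ) : ¬ Violates s R j v := by
  induction j with
  | zero =>
    have hall := h (fun _ => True) fun _ _ _ => id
    simp only [retainedCount, and_true, Finset.range_eq_Ico] at hall
    exact not_lt.2 hall
  | succ j ih =>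
    by_cases hj : ColumnContains s R (v + 2) j
    · refine fun hviol => ih ?_
      have hlt : j < colBound s := by have := hviol.lt_colBound; omega
      rw [Violates] at hviol ⊢
      rw [columnCount_Ico_eq_ite_add hlt, columnCount_Ico_eq_ite_add hlt, if_pos hj]
      split_ifs <;> omega
    · exact hR.not_violates_succ_of_pure hs h hj

theorem IsRPPOn.retainedCount_le_of_pure {p : Cell → Prop} (hp : ∀ c d, Before c d → p c → p d)
    {j : ℕ} (hviol : ¬ Violates s R j v) (hj : ¬ ColumnContains s R (v + 1) j)
    (hpj : p (lastCell s R (v + 2) j)) :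
    retainedCount s R p (v + 2) (Finset.Ico j (colBound s)) ≤
      retainedCount s R p (v + 1) (Finset.Ico j (colBound s)) := by
  have hsplit : ∀ u, columnCount s R u (Finset.Ico j (colBound s)) =
      retainedCount s R p u (Finset.Ico j (colBound s)) +
        retainedCount s R (fun c => ¬ p c) u (Finset.Ico j (colBound s)) := fun u => by
    simp only [columnCount, retainedCount, ← Finset.filter_filter]
    exact (Finset.card_filter_add_card_filter_not _).symm
  have hle : retainedCount s R (fun c => ¬ p c) (v + 1) (Finset.Ico j (colBound s)) ≤
      retainedCount s R (fun c => ¬ p c) (v + 2) (Finset.Ico j (colBound s)) := by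
    refine Finset.card_le_card fun k hk => ?_
    simp only [Finset.mem_filter, Finset.mem_Ico] at hk ⊢
    obtain ⟨⟨hjk, hk⟩, hcol, hpk⟩ := hk
    have hlt : j < k := lt_of_le_of_ne hjk fun h => hj (h ▸ hcol)
    have hcol' : ColumnContains s R (v + 2) k := by_contra fun hcol' =>
      hpk (hp _ _ (before_lastCell hlt
        ((hR.height_eq_of_not_columnContains hs hcol').ge.trans (hR.antitone_height hs _ hjk))) hpj)
    exact ⟨⟨hjk, hk⟩, hcol', fun h => hpk (hp _ _ (hR.before_lastCell_succ hs hcol hcol') h)⟩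
  rw [Violates, hsplit, hsplit] at hviol
  omega

theorem IsRPPOn.retainedCount_le_of_not_violates (h : ∀ j, ¬ Violates s R j v) {p : Cell → Prop}
    (hp : ∀ c d, Before c d → p c → p d) :
    retainedCount s R p (v + 2) (Finset.range (colBound s)) ≤
      retainedCount s R p (v + 1) (Finset.range (colBound s)) := by
  rw [Finset.range_eq_Ico]
  refine Nat.decreasingInduction' (P := fun j =>
    retainedCount s R p (v + 2) (Finset.Ico j (colBound s)) ≤
      retainedCount s R p (v + 1) (Finset.Ico j (colBound s)))
    (fun j hj _ ih => ?_) (Nat.zero_le (colBound s)) (by rw [Finset.Ico_self]; rfl)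
  by_cases hpure : ¬ ColumnContains s R (v + 1) j ∧ p (lastCell s R (v + 2) j)
  · exact hR.retainedCount_le_of_pure hs hp (h j) hpure.1 hpure.2
  · have himp : ColumnContains s R (v + 2) j ∧ p (lastCell s R (v + 2) j) →
        ColumnContains s R (v + 1) j ∧ p (lastCell s R (v + 1) j) := fun ⟨hcol', hpj⟩ => by
      have hcol : ColumnContains s R (v + 1) j := by_contra fun hcol => hpure ⟨hcol, hpj⟩
      exact ⟨hcol, hp _ _ (hR.before_lastCell_succ hs hcol hcol') hpj⟩
    rw [retainedCount, retainedCount] at ih ⊢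
    rw [card_filter_Ico_eq_ite_add _ hj, card_filter_Ico_eq_ite_add _ hj]
    refine add_le_add ?_ ih
    split_ifs with h₂ h₁
    exacts [le_rfl, absurd (himp h₂) h₁, zero_le_one, le_rfl]

theorem IsRPPOn.isYamanouchi_rppRowWord_iff :
    IsYamanouchi (rppRowWord s R) ↔ IsBallot s R := by
  have hiff : IsYamanouchi (rppRowWord s R) ↔ ∀ v, ∀ p : Cell → Prop,
      (∀ c d, Before c d → p c → p d) →
      retainedCount s R p (v + 2) (Finset.range (colBound s)) ≤
        retainedCount s R p (v + 1) (Finset.range (colBound s)) := by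
    simp only [isYamanouchi_iff, rppRowWord_eq_map, ← List.map_drop,
      ← hR.count_map_filter_retainedCells hs]
    rw [forall_comm]
    exact forall_congr' fun v => forall_drop_iff_forall_filter (pairwise_retainedCells s R)
      (P := fun L => (L.map R).count (v + 2) ≤ (L.map R).count (v + 1))
  rw [hiff]
  exact ⟨fun h j v => hR.not_violates_of_retainedCount_le hs (h v) j,
    fun h v _ hp => hR.retainedCount_le_of_not_violates hs (fun j => h j v) hp⟩

end RPP

end ReadingWord

/-! ### Schur polynomials -/

section Schur

theorem IsPartitionShape.isLowerSet {s : Finset Cell} (hs : IsPartitionShape s) :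
    IsLowerSet (s : Set Cell) :=
  fun _ _ hle hc => hs _ _ _ _ hc hle.1 hle.2

theorem IsPartitionShape.ordConnected_sdiff [DecidableEq Cell] {s t : Finset Cell}
    (hs : IsPartitionShape s) (ht : IsPartitionShape t) :
    ((s \ t : Finset Cell) : Set Cell).OrdConnected := by
  rw [Finset.coe_sdiff, Set.sdiff_eq]
  exact hs.isLowerSet.ordConnected.inter ht.isLowerSet.compl.ordConnected

theorem finsum_subtype_eq_sum {α M : Type*} [AddCommMonoid M] {p : α → Prop} {t : Finset α}
    (h : ∀ a, p a ↔ a ∈ t) (f : α → M) : ∑ᶠ a : {a // p a}, f a = ∑ a ∈ t, f a :=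
  (finsum_set_coe_eq_finsum_mem {a | p a}).trans
    ((finsum_mem_congr (Set.ext h) fun _ _ => rfl).trans (finsum_mem_coe_finset f t))

variable {s : Finset Cell} {U : Cell → ℕ} {n v j : ℕ}

theorem isSSYTOn_iff : IsSSYTOn s U ↔ IsRPPOn s U ∧ ceqOn s U = 0 := by
  have hceq : ceqOn s U = 0 ↔
      ∀ i j, (i, j) ∈ s → (i + 1, j) ∈ s → U (i, j) ≠ U (i + 1, j) := by
    simp only [funext_iff, ceqOn, Pi.zero_apply, Finset.card_eq_zero, Finset.filter_eq_empty_iff,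
      Prod.forall]
    exact ⟨fun h i j hc hd heq => h i i j hc ⟨rfl, hd, heq⟩,
      fun h _ i j hc ⟨_, hd, heq⟩ => h i j hc hd heq⟩
  rw [hceq]
  constructor
  · exact fun h => ⟨⟨h.1, h.2.1, h.2.2.1, fun i j hc hd => (h.2.2.2 i j hc hd).le⟩,
      fun i j hc hd => (h.2.2.2 i j hc hd).ne⟩
  · exact fun ⟨h, hne⟩ => ⟨h.1, h.2.1, h.2.2.1, fun i j hc hd =>
      (h.2.2.2 i j hc hd).lt_of_ne (hne i j hc hd)⟩

theorem IsSSYTOn.isRPPOn (hU : IsSSYTOn s U) : IsRPPOn s U := (isSSYTOn_iff.1 hU).1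

theorem IsSSYTOn.lt_of_lt (hs : (s : Set Cell).OrdConnected) (hU : IsSSYTOn s U) {i k : ℕ}
    (hi : (i, j) ∈ s) (hk : (k, j) ∈ s) (hik : i < k) : U (i, j) < U (k, j) := by
  have hmem : (i + 1, j) ∈ s :=
    hs.out hi hk ⟨Prod.mk_le_mk.2 ⟨i.le_succ, le_rfl⟩, Prod.mk_le_mk.2 ⟨hik, le_rfl⟩⟩
  exact (hU.2.2.2 i j hi hmem).trans_le (hU.isRPPOn.le_of_le_of_mem hs hmem hk hik le_rfl)

theorem IsSSYTOn.succ_fst_le (hs : IsPartitionShape s) (hU : IsSSYTOn s U) {i : ℕ}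
    (hi : (i, j) ∈ s) : i + 1 ≤ U (i, j) := by
  induction i with
  | zero => exact hU.1 _ hi
  | succ i ih =>
    have hmem : (i, j) ∈ s := hs _ _ _ _ hi i.le_succ le_rfl
    exact (ih hmem).trans_lt (hU.2.2.2 i j hmem hi)

theorem IsSSYTOn.wtS_eq_wtRPP (hs : (s : Set Cell).OrdConnected) (hU : IsSSYTOn s U) (v : ℕ) :
    wtS s U v = wtRPP s U v := by
  have hcard : wtS s U v = (s.filter fun c => U c = v).card := by
    rw [wtS, Finset.card_filter]
    exact Finset.sum_congr rfl fun _ _ => by congr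
  rw [hcard, wtRPP]
  refine Finset.card_bij (fun c _ => c.2) ?_ ?_ ?_
  · rintro ⟨i, j⟩ hc
    rw [Finset.mem_filter] at hc ⊢
    exact ⟨Finset.mem_range.2 (snd_lt_of_mem hc.1), i, hc⟩
  · rintro ⟨i, j⟩ hc ⟨k, _⟩ hd rfl
    rw [Finset.mem_filter] at hc hd
    rcases lt_trichotomy i k with hik | rfl | hik
    · exact absurd (hc.2.trans hd.2.symm) (hU.lt_of_lt hs hc.1 hd.1 hik).ne
    · rfl
    · exact absurd (hd.2.trans hc.2.symm) (hU.lt_of_lt hs hd.1 hc.1 hik).ne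
  · intro j hj
    obtain ⟨i, hi⟩ := (Finset.mem_filter.1 hj).2
    exact ⟨(i, j), Finset.mem_filter.2 hi, rfl⟩

theorem IsBallot.exists_columnContains (hb : IsBallot s U) (h : ColumnContains s U (v + 2) j) :
    ∃ k, j ≤ k ∧ ColumnContains s U (v + 1) k := by
  obtain ⟨i, hi, hval⟩ := h
  have hpos : 0 < columnCount s U (v + 2) (Finset.Ico j (colBound s)) := Finset.card_pos.2
    ⟨j, Finset.mem_filter.2 ⟨Finset.mem_Ico.2 ⟨le_rfl, snd_lt_of_mem hi⟩, i, hi, hval⟩⟩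
  obtain ⟨k, hk⟩ := Finset.card_pos.1 (hpos.trans_le (not_lt.1 (hb j v)))
  rw [Finset.mem_filter, Finset.mem_Ico] at hk
  exact ⟨k, hk.1.1, hk.2⟩

theorem IsSSYTOn.apply_eq_of_isBallot (hs : IsPartitionShape s) (hU : IsSSYTOn s U)
    (hb : IsBallot s U) (r j : ℕ) (hc : (r, j) ∈ s) : U (r, j) = r + 1 := by
  refine le_antisymm (not_lt.1 fun hlt => ?_) (hU.succ_fst_le hs hc)
  obtain ⟨v, hv⟩ : ∃ v, U (r, j) = v + 2 := ⟨U (r, j) - 2, by omega⟩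
  obtain ⟨k, hjk, i, hi, hval⟩ := hb.exists_columnContains ⟨r, hc, hv⟩
  have hmono {r' j' : ℕ} (hc' : (r', j') ∈ s) (hr : r ≤ r') (hj : j ≤ j') :
      U (r, j) ≤ U (r', j') :=
    hU.isRPPOn.le_of_le_of_mem hs.isLowerSet.ordConnected hc hc' hr hj
  rcases hjk.eq_or_lt with rfl | hjk
  · have hir : i < r := not_le.1 fun hri => by
      have := hmono hi hri le_rfl
      omega
    have := hU.apply_eq_of_isBallot hs hb i j hi
    omega
  · have := snd_lt_of_mem hi
    have := hU.apply_eq_of_isBallot hs hb i k hi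
    have hrk : (r, k) ∈ s := hs _ _ _ _ hi (by omega) le_rfl
    have := hU.apply_eq_of_isBallot hs hb r k hrk
    have := hmono hrk le_rfl hjk.le
    omega
termination_by (colBound s - j, r)
decreasing_by all_goals omega

theorem highestTabOf_of_mem {c : Cell} (hc : c ∈ s) : highestTabOf s c = c.1 + 1 := if_pos hc

theorem IsSSYTOn.eq_highestTabOf (hs : IsPartitionShape s) (hU : IsSSYTOn s U)
    (hb : IsBallot s U) : U = highestTabOf s := by
  funext c
  by_cases hc : c ∈ s
  · rw [highestTabOf_of_mem hc, ← hU.apply_eq_of_isBallot hs hb c.1 c.2 hc]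
  · rw [hU.2.1 c hc, highestTabOf, if_neg hc]

theorem isSSYTOn_highestTabOf (s : Finset Cell) : IsSSYTOn s (highestTabOf s) := by
  refine ⟨fun c hc => ?_, fun c hc => if_neg hc, fun i j hc hd => ?_, fun i j hc hd => ?_⟩
  · rw [highestTabOf_of_mem hc]
    exact Nat.succ_pos _
  · rw [highestTabOf_of_mem hc, highestTabOf_of_mem hd]
  · rw [highestTabOf_of_mem hc, highestTabOf_of_mem hd]
    exact Nat.lt_succ_self _

theorem columnContains_highestTabOf_iff :
    ColumnContains s (highestTabOf s) (v + 1) j ↔ (v, j) ∈ s := by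
  constructor
  · rintro ⟨i, hi, hval⟩
    rw [highestTabOf_of_mem hi] at hval
    exact Nat.succ.inj hval ▸ hi
  · exact fun h => ⟨v, h, highestTabOf_of_mem h⟩

theorem isBallot_highestTabOf (hs : IsPartitionShape s) : IsBallot s (highestTabOf s) := by
  refine fun j v => not_lt.2 (Finset.card_le_card fun k hk => ?_)
  rw [Finset.mem_filter] at hk ⊢
  exact ⟨hk.1, columnContains_highestTabOf_iff.2
    (hs _ _ _ _ (columnContains_highestTabOf_iff.1 hk.2) v.le_succ le_rfl)⟩

theorem schurOf_eq_sum (hs : (s : Set Cell).OrdConnected) (n : ℕ) :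
    schurOf n s = ∑ U ∈ (rppFinset s n).filter (fun U => ceqOn s U = 0),
      ∏ k, MvPolynomial.X k ^ weight n s U k := by
  have hmem : ∀ U, (IsSSYTOn s U ∧ ∀ c ∈ s, U c ≤ n) ↔
      U ∈ (rppFinset s n).filter (fun U => ceqOn s U = 0) := fun U => by
    rw [Finset.mem_filter, mem_rppFinset, isSSYTOn_iff, and_right_comm]
  rw [schurOf, finsum_subtype_eq_sum hmem fun U => ∏ i : Fin n, MvPolynomial.X i ^ wtS s U (i + 1)]
  refine Finset.sum_congr rfl fun U hU => Finset.prod_congr rfl fun k _ => ?_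
  rw [((hmem U).2 hU).1.wtS_eq_wtRPP hs, weight]

theorem liftX_schurOf_eq_rppSum (hs : (s : Set Cell).OrdConnected) (n : ℕ) :
    liftX n (schurOf n s) = rppSum s n fun c => if c = 0 then 1 else 0 := by
  rw [schurOf_eq_sum hs, liftX, rppSum, map_sum, Finset.sum_filter]
  refine Finset.sum_congr rfl fun U _ => ?_
  split_ifs with h
  · simp only [map_prod, map_pow, MvPolynomial.map_X, map_one, one_mul]
  · rw [map_zero, zero_mul]

theorem highestTabOf_mem_rppFinset (hn : AtMostRows s n) : highestTabOf s ∈ rppFinset s n := by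
  refine mem_rppFinset.2 ⟨(isSSYTOn_highestTabOf s).isRPPOn, fun c hc => ?_⟩
  rw [highestTabOf_of_mem hc]
  exact hn c hc

theorem liftX_schurOf_mul_alternant_staircase (hs : IsPartitionShape s) (hn : AtMostRows s n) :
    liftX n (schurOf n s) * alternant (MvPolynomial (Fin n) ℤ) (staircase n) =
      alternant (MvPolynomial (Fin n) ℤ) (weight n s (highestTabOf s) + staircase n) := by
  have hs' := hs.isLowerSet.ordConnected
  rw [liftX_schurOf_eq_rppSum hs', rppSum_mul_alternant_staircase hs',
    Finset.sum_eq_single_of_mem (highestTabOf s)]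
  · rw [if_pos (isSSYTOn_iff.1 (isSSYTOn_highestTabOf s)).2, map_one, one_mul]
  · exact Finset.mem_filter.2 ⟨highestTabOf_mem_rppFinset hn, isBallot_highestTabOf hs⟩
  · intro U hU hne
    rw [Finset.mem_filter, mem_rppFinset] at hU
    rw [if_neg fun h => hne ((isSSYTOn_iff.2 ⟨hU.1.1, h⟩).eq_highestTabOf hs hU.2), map_zero,
      zero_mul]

end Schur

/-! ### Yamanouchi words and the Burge correspondence -/

section Knuth

/-- The numbers of occurrences of `1, 2, 3, …` in the word `w` are weakly decreasing, so that a
Yamanouchi word is a word all of whose suffixes are dominant. -/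
def IsDominant (w : List ℕ) : Prop := ∀ v, w.count (v + 2) ≤ w.count (v + 1)

variable {w w' l : List ℕ} {a b : ℕ}

theorem isDominant_iff_of_perm (h : w.Perm w') : IsDominant w ↔ IsDominant w' := by
  simp only [IsDominant, h.count_eq]

theorem isYamanouchi_cons : IsYamanouchi (a :: w) ↔ IsDominant (a :: w) ∧ IsYamanouchi w := by
  simp only [isYamanouchi_iff]
  exact ⟨fun h => ⟨h 0, fun k => h (k + 1)⟩, fun h k => k.casesOn h.1 h.2⟩

theorem IsYamanouchi.isDominant (h : IsYamanouchi w) : IsDominant w := isYamanouchi_iff.1 h 0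

theorem isYamanouchi_append_congr (u : List ℕ) (hperm : w.Perm w')
    (h : IsYamanouchi w ↔ IsYamanouchi w') : IsYamanouchi (u ++ w) ↔ IsYamanouchi (u ++ w') := by
  induction u with
  | nil => exact h
  | cons a u ih =>
    rw [List.cons_append, List.cons_append, isYamanouchi_cons, isYamanouchi_cons, ih,
      isDominant_iff_of_perm ((hperm.append_left u).cons a)]

theorem IsDominant.cons_or_exists_eq (hl : IsDominant l) (h : IsDominant (a :: b :: l)) :
    IsDominant (b :: l) ∨ ∃ v, a = v + 1 ∧ b = v + 2 ∧ l.count (v + 2) = l.count (v + 1) := by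
  refine or_iff_not_imp_left.2 fun hb => ?_
  obtain ⟨v, hv⟩ := not_forall.1 hb
  have hlv := hl v
  have hav := h v
  simp only [List.count_cons, beq_iff_eq] at hv hav
  exact ⟨v, by grind, by grind, by grind⟩

theorem isDominant_cons_of_xzy {x y z : ℕ} (hxy : x ≤ y) (hyz : y < z) (hw : IsDominant w)
    (hyw : IsDominant (y :: w)) (h : IsDominant (x :: z :: y :: w)) :
    IsDominant (z :: y :: w) ∧ IsDominant (x :: y :: w) := by
  refine ⟨(hyw.cons_or_exists_eq h).resolve_right ?_, (hyw.cons_or_exists_eq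
    ((isDominant_iff_of_perm (.swap z x _)).1 h)).resolve_right (by omega)⟩
  rintro ⟨v, rfl, rfl, heq⟩
  obtain rfl : y = v + 1 := by omega
  rw [List.count_cons_self, List.count_cons_of_ne (by omega)] at heq
  have := hw v
  omega

theorem isDominant_cons_of_yxz {x y z : ℕ} (hxy : x < y) (hyz : y ≤ z) (hw : IsDominant w)
    (hxzw : IsDominant (x :: z :: w)) (h : IsDominant (y :: x :: z :: w)) :
    IsDominant (z :: w) ∧ IsDominant (x :: w) := by
  refine ⟨(hw.cons_or_exists_eq hxzw).resolve_right ?_, (hw.cons_or_exists_eq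
    ((isDominant_iff_of_perm (.swap z x _)).1 hxzw)).resolve_right (by omega)⟩
  rintro ⟨v, rfl, rfl, heq⟩
  obtain rfl : y = v + 2 := by omega
  have := h v
  simp only [List.count_cons, beq_iff_eq] at this
  grind

theorem KnuthStep.isYamanouchi_iff (h : KnuthStep w w') : IsYamanouchi w ↔ IsYamanouchi w' := by
  cases h with
  | kxzy u w x y z hxy hyz =>
    refine isYamanouchi_append_congr u (.swap z x _) ?_
    simp only [isYamanouchi_cons, isDominant_iff_of_perm (List.Perm.swap z x (y :: w))]
    refine and_congr_right fun h => and_congr_left fun ⟨hyw, hw⟩ => ?_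
    have := isDominant_cons_of_xzy hxy hyz hw.isDominant hyw
      ((isDominant_iff_of_perm (.swap x z _)).1 h)
    exact iff_of_true this.1 this.2
  | kyxz u w x y z hxy hyz =>
    refine isYamanouchi_append_congr u (.cons y (.swap z x _)) ?_
    simp only [isYamanouchi_cons, isDominant_iff_of_perm (List.Perm.swap z x w),
      isDominant_iff_of_perm ((List.Perm.swap z x w).cons y)]
    refine and_congr_right fun h => and_congr_right fun hxz => and_congr_left fun hw => ?_
    have := isDominant_cons_of_yxz hxy hyz hw.isDominant
      ((isDominant_iff_of_perm (.swap x z _)).1 hxz)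
      ((isDominant_iff_of_perm ((List.Perm.swap x z _).cons y)).1 h)
    exact iff_of_true this.1 this.2

theorem KnuthEquiv.isYamanouchi_iff (h : KnuthEquiv w w') : IsYamanouchi w ↔ IsYamanouchi w' := by
  induction h with
  | rel _ _ h => exact h.isYamanouchi_iff
  | refl => rfl
  | symm _ _ _ ih => exact ih.symm
  | trans _ _ _ _ _ ih ih' => exact ih.trans ih'

end Knuth

section Burge

/-- The image under the Burge correspondence of the biword of heights and letters of `R`. -/
def burge (B : BurgeData) (s : Finset Cell) (R : Cell → ℕ) : BurgeOut :=
  B.out (rppHeights s R) (rppRowWord s R)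

variable {s : Finset Cell} {R : Cell → ℕ} {v : ℕ}

theorem IsSSYTOn.readingWordOn_eq (h : IsSSYTOn s R) : readingWordOn s R = rppRowWord s R := by
  unfold readingWordOn rppRowWord rowWordOn
  congr 1
  refine List.map_congr_left fun i _ => ?_
  congr 1
  refine (List.filter_eq_self.2 fun j hj => ?_).symm
  simp only [decide_eq_true_eq, or_iff_not_imp_left, not_not]
  exact fun hmem => (h.2.2.2 i j (mem_rowList.1 hj) hmem).ne'

theorem wtRPP_pos_iff : 0 < wtRPP s R v ↔ ∃ c ∈ s, R c = v := by
  rw [wtRPP, Finset.card_pos]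
  constructor
  · rintro ⟨j, hj⟩
    obtain ⟨i, hi⟩ := (Finset.mem_filter.1 hj).2
    exact ⟨(i, j), hi⟩
  · rintro ⟨c, hc, hv⟩
    exact ⟨c.2, Finset.mem_filter.2 ⟨Finset.mem_range.2 (snd_lt_of_mem hc), c.1, hc, hv⟩⟩

variable (hs : (s : Set Cell).OrdConnected) (hR : IsRPPOn s R)

include hs hR

theorem IsRPPOn.isBiword : IsBiword (rppHeights s R) (rppRowWord s R) := by
  rw [rppRowWord_eq_map, rppHeights_eq_map]
  refine ⟨by rw [List.length_map, List.length_map], fun x hx => ?_, fun x hx => ?_, fun p hp => ?_⟩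
  · obtain ⟨c, _, rfl⟩ := List.mem_map.1 hx
    exact Nat.succ_pos _
  · obtain ⟨c, hc, rfl⟩ := List.mem_map.1 hx
    exact hR.1 c (mem_retainedCells.1 hc).1
  · rw [List.length_map] at hp
    have hbefore := List.pairwise_iff_getElem.1 (pairwise_retainedCells s R) p (p + 1) (by omega) hp
      (Nat.lt_succ_self p)
    have hmem (q : ℕ) (hq : q < (retainedCells s R).length) : (retainedCells s R)[q] ∈ s :=
      (mem_retainedCells.1 (List.getElem_mem hq)).1
    have hgetD (f : Cell → ℕ) (q : ℕ) (hq : q < (retainedCells s R).length) :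
        ((retainedCells s R).map f).getD q 0 = f (retainedCells s R)[q] := by
      rw [List.getD_eq_getElem _ _ (by rwa [List.length_map]), List.getElem_map]
    rw [hgetD _ _ hp, hgetD _ _ (by omega), hgetD _ _ hp, hgetD _ _ (by omega)]
    refine ⟨by rcases hbefore with h | h <;> omega, fun hlt => ?_⟩
    rcases hbefore with hrow | ⟨hrow, hcol⟩
    · omega
    · have hle := hR.le_of_le_of_mem hs (hmem p (by omega)) (hmem _ hp) hrow.le hcol.le
      exact absurd hlt hle.not_gt

theorem IsRPPOn.isPartitionShape_burge (B : BurgeData) : IsPartitionShape (burge B s R).sh :=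
  B.shape_part _ _ (hR.isBiword hs)

theorem IsRPPOn.burge_P (B : BurgeData) (hb : IsBallot s R) :
    (burge B s R).P = highestTabOf (burge B s R).sh := by
  have hsh := hR.isPartitionShape_burge hs B
  have hP : IsSSYTOn (burge B s R).sh (burge B s R).P := B.ssytP _ _ (hR.isBiword hs)
  refine hP.eq_highestTabOf hsh ?_
  rw [← hP.isRPPOn.isYamanouchi_rppRowWord_iff hsh.isLowerSet.ordConnected, ← hP.readingWordOn_eq]
  exact (B.knuthP _ _ (hR.isBiword hs)).isYamanouchi_iff.2
    ((hR.isYamanouchi_rppRowWord_iff hs).2 hb)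

theorem IsRPPOn.wtRPP_highestTabOf_burge (B : BurgeData) (hb : IsBallot s R) (v : ℕ) :
    wtRPP (burge B s R).sh (highestTabOf (burge B s R).sh) (v + 1) = wtRPP s R (v + 1) := by
  rw [← (isSSYTOn_highestTabOf _).wtS_eq_wtRPP
      (hR.isPartitionShape_burge hs B).isLowerSet.ordConnected,
    ← hR.burge_P hs B hb, ← hR.count_rppRowWord hs]
  rw [burge]
  convert B.contentP _ _ (hR.isBiword hs) (v + 1)

theorem IsRPPOn.atMostRows_burge (B : BurgeData) (hb : IsBallot s R) {n : ℕ}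
    (hn : ∀ c ∈ s, R c ≤ n) : AtMostRows (burge B s R).sh n := by
  intro c hc
  have hpos : 0 < wtRPP s R (c.1 + 1) := by
    rw [← hR.wtRPP_highestTabOf_burge hs B hb, wtRPP_pos_iff]
    exact ⟨c, hc, highestTabOf_of_mem hc⟩
  obtain ⟨d, hd, hval⟩ := wtRPP_pos_iff.1 hpos
  exact hval.ge.trans (hn d hd)

theorem IsRPPOn.liftX_schurOf_burge_mul_alternant (B : BurgeData) (hb : IsBallot s R) {n : ℕ}
    (hn : ∀ c ∈ s, R c ≤ n) :
    liftX n (schurOf n (burge B s R).sh) * alternant (MvPolynomial (Fin n) ℤ) (staircase n) =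
      alternant (MvPolynomial (Fin n) ℤ) (weight n s R + staircase n) := by
  have hweight : weight n (burge B s R).sh (highestTabOf (burge B s R).sh) = weight n s R :=
    funext fun k => hR.wtRPP_highestTabOf_burge hs B hb k
  rw [liftX_schurOf_mul_alternant_staircase (hR.isPartitionShape_burge hs B)
    (hR.atMostRows_burge hs B hb hn), hweight]

end Burge

/-! ### A reverse plane partition is determined by its biword -/

section Biword

theorem mem_of_map_filter_eq_cons {l : List ℕ} {f : ℕ → ℕ} {p : ℕ → Bool} {x : ℕ} {w : List ℕ}
    (h : (l.filter p).map f = x :: w) : ∃ k ∈ l, f k = x := by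
  obtain ⟨k, hk, hkx⟩ := List.mem_map.1 (h ▸ List.mem_cons_self : x ∈ (l.filter p).map f)
  exact ⟨k, (List.mem_filter.1 hk).1, hkx⟩

theorem eq_of_map_filter_eq {l : List ℕ} {f g b : ℕ → ℕ} {p : ℕ → Prop}
    (hf : l.Pairwise fun j k => f j ≤ f k) (hg : l.Pairwise fun j k => g j ≤ g k)
    (hfb : ∀ j ∈ l, p j → f j ≤ b j) (hgb : ∀ j ∈ l, p j → g j ≤ b j)
    (h : (l.filter fun j => ¬ p j ∨ b j ≠ f j).map f =
      (l.filter fun j => ¬ p j ∨ b j ≠ g j).map g) :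
    ∀ j ∈ l, f j = g j := by
  induction l with
  | nil => exact fun _ hj => absurd hj List.not_mem_nil
  | cons j l ih =>
    rw [List.pairwise_cons] at hf hg
    rw [List.forall_mem_cons] at hfb hgb ⊢
    -- If the first letter of `f` is retained and that of `g` is not, then the latter is the larger
    -- one although the former occurs further on in `g`.
    have not_retained {f g : ℕ → ℕ} (hfb : p j → f j ≤ b j) (hg : ∀ k ∈ l, g j ≤ g k)
        (hgj : ¬ (¬ p j ∨ b j ≠ g j)) {w : List ℕ} {q : ℕ → Bool}
        (h : f j :: w = (l.filter q).map g) : ¬ (¬ p j ∨ b j ≠ f j) := by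
      obtain ⟨k, hk, hkj⟩ := mem_of_map_filter_eq_cons h.symm
      have := hg k hk
      grind
    by_cases hfj : ¬ p j ∨ b j ≠ f j <;> by_cases hgj : ¬ p j ∨ b j ≠ g j <;>
      simp only [List.filter_cons, hfj, hgj, decide_true, decide_false, if_true, Bool.false_eq_true,
        if_false, List.map_cons, List.cons.injEq] at h
    · exact ⟨h.1, ih hf.2 hg.2 hfb.2 hgb.2 h.2⟩
    · exact absurd hfj (not_retained hfb.1 hg.1 hgj h)
    · exact absurd hgj (not_retained hgb.1 hf.1 hfj h.symm)
    · have heq : f j = g j := by grind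
      exact ⟨heq, ih hf.2 hg.2 hfb.2 hgb.2 h⟩

variable {s : Finset Cell} {R R' : Cell → ℕ} {i : ℕ}

theorem retainedRow_eq_filter (s : Finset Cell) (R : Cell → ℕ) (i : ℕ) :
    retainedRow s R i = (retainedCells s R).filter fun c => c.1 = i := by
  have hrow : (retainedRow s R i).Pairwise Before :=
    List.pairwise_map.2 (((pairwise_rowList s i).filter _).imp fun hlt => .inr ⟨rfl, hlt⟩)
  refine List.Perm.eq_of_pairwise (fun _ _ _ _ h h' => absurd h' (asymm h)) hrow
    ((pairwise_retainedCells s R).filter _) ?_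
  rw [List.perm_ext_iff_of_nodup (hrow.imp fun h => ne_of_irrefl h)
    ((nodup_retainedCells s R).filter _)]
  intro c
  rw [mem_retainedRow, List.mem_filter, mem_retainedCells, decide_eq_true_eq]

theorem map_retainedRow_eq_map_filter_zip (s : Finset Cell) (R : Cell → ℕ) (i : ℕ) :
    (retainedRow s R i).map R =
      (((rppHeights s R).zip (rppRowWord s R)).filter fun x => x.1 = i + 1).map Prod.snd := by
  rw [retainedRow_eq_filter, rppHeights_eq_map, rppRowWord_eq_map, List.zip_map', List.filter_map,
    List.map_map]
  simp only [Function.comp_def, Nat.add_right_cancel_iff]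

variable (hs : (s : Set Cell).OrdConnected) (hR : IsRPPOn s R)

include hs hR

theorem IsRPPOn.pairwise_rowList_le (i : ℕ) :
    (rowList s i).Pairwise fun j k => R (i, j) ≤ R (i, k) :=
  (pairwise_rowList s i).imp_of_mem fun hj hk hlt =>
    hR.le_of_le_of_mem hs (mem_rowList.1 hj) (mem_rowList.1 hk) le_rfl hlt.le

theorem IsRPPOn.row_eq_of_map_retainedRow_eq (hR' : IsRPPOn s R')
    (hbelow : ∀ j, R (i + 1, j) = R' (i + 1, j))
    (h : (retainedRow s R i).map R = (retainedRow s R' i).map R') (j : ℕ) :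
    R (i, j) = R' (i, j) := by
  by_cases hj : (i, j) ∈ s
  · simp only [retainedRow, List.map_map, Function.comp_def, ← hbelow] at h
    refine eq_of_map_filter_eq (b := fun j => R (i + 1, j)) (p := fun j => (i + 1, j) ∈ s)
      (hR.pairwise_rowList_le hs i) (hR'.pairwise_rowList_le hs i)
      (fun j hj => hR.2.2.2 i j (mem_rowList.1 hj))
      (fun j hj hd => (hR'.2.2.2 i j (mem_rowList.1 hj) hd).trans (hbelow j).ge)
      ?_ j (mem_rowList.2 hj)
    convert h
  · rw [hR.2.1 _ hj, hR'.2.1 _ hj]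

theorem IsRPPOn.eq_of_rppHeights_eq_of_rppRowWord_eq (hR' : IsRPPOn s R')
    (hheights : rppHeights s R = rppHeights s R') (hword : rppRowWord s R = rppRowWord s R') :
    R = R' := by
  have hrow (m i : ℕ) (hi : s.sup Prod.fst < i + m) : ∀ j, R (i, j) = R' (i, j) := by
    induction m generalizing i with
    | zero =>
      intro j
      have hj : (i, j) ∉ s := fun hj => (Nat.lt_succ_iff.1 (fst_lt_of_mem hj)).not_gt hi
      rw [hR.2.1 _ hj, hR'.2.1 _ hj]
    | succ m ih =>
      refine hR.row_eq_of_map_retainedRow_eq hs hR' (ih (i + 1) (by omega)) ?_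
      rw [map_retainedRow_eq_map_filter_zip, map_retainedRow_eq_map_filter_zip, hheights, hword]
  exact funext fun ⟨i, j⟩ => hrow (s.sup Prod.fst + 1) i (by omega) j

omit hs hR in
theorem IsSSYTOn.mem_iff_ne_zero (hR : IsSSYTOn s R) {c : Cell} : c ∈ s ↔ R c ≠ 0 :=
  ⟨fun hc => Nat.one_le_iff_ne_zero.1 (hR.1 c hc), fun h => by_contra fun hc => h (hR.2.1 c hc)⟩

theorem IsRPPOn.eq_of_burge_Q_eq (B : BurgeData) (hb : IsBallot s R) (hR' : IsRPPOn s R')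
    (hb' : IsBallot s R') (h : (burge B s R).Q = (burge B s R').Q) : R = R' := by
  have hQ : IsSSYTOn (burge B s R).sh (burge B s R).Q := B.ssytQ _ _ (hR.isBiword hs)
  have hQ' : IsSSYTOn (burge B s R').sh (burge B s R').Q := B.ssytQ _ _ (hR'.isBiword hs)
  have hsh : (burge B s R).sh = (burge B s R').sh := by
    ext c
    rw [hQ.mem_iff_ne_zero, hQ'.mem_iff_ne_zero, h]
  have hP : (burge B s R).P = (burge B s R').P := by
    rw [hR.burge_P hs B hb, hR'.burge_P hs B hb', hsh]
  have hout : burge B s R = burge B s R' := by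
    cases hx : burge B s R
    cases hy : burge B s R'
    simp_all only
  obtain ⟨hheights, hword⟩ := B.inj _ _ _ _ (hR.isBiword hs) (hR'.isBiword hs) hout
  exact hR.eq_of_rppHeights_eq_of_rppRowWord_eq hs hR' hheights hword

end Biword

/-! ### The tableaux Schur expansion -/

section Expansion

open MvPolynomial

variable {s : Finset Cell} {n : ℕ}

theorem gFlagged_eq_rppSum (n : ℕ) (s : Finset Cell) :
    gFlagged n s (fun _ => n) = rppSum s n fun c => ∏ i : Fin n, X i ^ c i :=
  finsum_subtype_eq_sum (fun _ => mem_rppFinset.symm)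
    fun R => tMono n (ceqOn s R) * ∏ i : Fin n, X i ^ wtRPP s R (i + 1)

theorem AtMostRows.ceqOn_eq_extendf_iff (hn : AtMostRows s n) (R : Cell → ℕ) (α : Fin n → ℕ) :
    (∀ r, ceqOn s R r = extendf n α r) ↔ (fun i : Fin n => ceqOn s R i) = α := by
  have hlt (i : Fin n) : extendf n α i = α i := by rw [extendf, dif_pos i.2]
  have hge (r : ℕ) (hr : ¬ r < n) : ceqOn s R r = extendf n α r := by
    simp only [extendf, dif_neg hr, ceqOn, Finset.card_eq_zero, Finset.filter_eq_empty_iff]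
    exact fun c hc hcr => hr (hcr.1 ▸ hn c hc)
  rw [_root_.funext_iff]
  refine ⟨fun h i => (h i).trans (hlt i), fun h r => ?_⟩
  by_cases hr : r < n
  · exact (h ⟨r, hr⟩).trans (hlt ⟨r, hr⟩).symm
  · exact hge r hr

variable (hs : (s : Set Cell).OrdConnected)

include hs

theorem isCompatibleRPP_iff (B : BurgeData) (q : BurgeOut) (R : Cell → ℕ) :
    IsCompatibleRPP n B s (fun _ => n) q R ↔
      R ∈ (rppFinset s n).filter (IsBallot s) ∧ q = burge B s R := by
  rw [Finset.mem_filter, mem_rppFinset]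
  constructor
  · rintro ⟨⟨hR, hn, hyam, hq⟩, -⟩
    exact ⟨⟨⟨hR, hn⟩, (hR.isYamanouchi_rppRowWord_iff hs).1 hyam⟩, hq.symm⟩
  · rintro ⟨⟨⟨hR, hn⟩, hb⟩, rfl⟩
    refine ⟨⟨hR, hn, (hR.isYamanouchi_rppRowWord_iff hs).2 hb, rfl⟩,
      fun R' ⟨hR', _, hyam, hQ⟩ => ?_⟩
    exact hR'.eq_of_burge_Q_eq hs B ((hR'.isYamanouchi_rppRowWord_iff hs).1 hyam) hR hb hQ

theorem finsum_isCompatibleRPP_eq_sum (hn : AtMostRows s n) (B : BurgeData) {M : Type*}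
    [AddCommMonoid M] (f : Finset Cell → M) (α : Fin n → ℕ) :
    (∑ᶠ q : {q : BurgeOut × (Cell → ℕ) // IsCompatibleRPP n B s (fun _ => n) q.1 q.2 ∧
        ∀ r, ceqOn s q.2 r = extendf n α r}, f q.1.1.sh) =
      ∑ R ∈ ((rppFinset s n).filter (IsBallot s)).filter
        (fun R => (fun i : Fin n => ceqOn s R i) = α), f (burge B s R).sh := by
  have hinj : Function.Injective fun R => (burge B s R, R) := fun _ _ h => (Prod.mk.inj h).2
  rw [finsum_subtype_eq_sum (t := Finset.map ⟨_, hinj⟩ _) (fun q => ?_) (fun q => f q.1.sh),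
    Finset.sum_map]
  · rfl
  · rw [isCompatibleRPP_iff hs, hn.ceqOn_eq_extendf_iff, and_right_comm,
      ← Finset.mem_filter (p := fun R => (fun i : Fin n => ceqOn s R i) = α), Finset.mem_map]
    constructor
    · exact fun ⟨hmem, hq⟩ => ⟨q.2, hmem, Prod.ext hq.symm rfl⟩
    · rintro ⟨R, hmem, rfl⟩
      exact ⟨hmem, rfl⟩

theorem finsum_tMono_mul_finsum_isCompatibleRPP (hn : AtMostRows s n) (B : BurgeData) :
    (∑ᶠ α : Fin n → ℕ, tMono n (extendf n α) *
        ∑ᶠ q : {q : BurgeOut × (Cell → ℕ) // IsCompatibleRPP n B s (fun _ => n) q.1 q.2 ∧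
          ∀ r, ceqOn s q.2 r = extendf n α r}, liftX n (schurOf n q.1.1.sh)) =
      ∑ R ∈ (rppFinset s n).filter (IsBallot s),
        tMono n (ceqOn s R) * liftX n (schurOf n (burge B s R).sh) := by
  simp only [finsum_isCompatibleRPP_eq_sum hs hn B fun sh => liftX n (schurOf n sh)]
  set t := (rppFinset s n).filter (IsBallot s)
  set ceq : (Cell → ℕ) → Fin n → ℕ := fun R i => ceqOn s R i
  rw [finsum_eq_sum_of_support_subset (s := t.image ceq) _ fun α hα => ?_,
    ← Finset.sum_fiberwise_of_maps_to fun R hR => Finset.mem_image_of_mem ceq hR]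
  · refine Finset.sum_congr rfl fun α _ => ?_
    rw [Finset.mul_sum]
    refine Finset.sum_congr rfl fun R hR => ?_
    rw [funext ((hn.ceqOn_eq_extendf_iff R α).2 (Finset.mem_filter.1 hR).2)]
  · obtain ⟨R, hR, -⟩ := Finset.exists_ne_zero_of_sum_ne_zero (right_ne_zero_of_mul hα)
    obtain ⟨hmem, hceq⟩ := Finset.mem_filter.1 hR
    exact Finset.mem_coe.2 (Finset.mem_image.2 ⟨R, hmem, hceq⟩)

end Expansion

end Development

/-- The refined dual stable Grothendieck polynomial has the tableaux
Schur expansion `g̃_{λ/μ}(x; t) = Σ_{Q ∈ 𝕋(λ/μ)} t^{ceq(Q)} s_{sh(Q)}(x)`. -/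
theorem gtilde_schur_expansion
    (n : ℕ) (B : BurgeData)
    (lam mu : Finset Cell)
    (hlam : IsPartitionShape lam) (hmu : IsPartitionShape mu)
    (hsub : mu ⊆ lam) (hlamn : AtMostRows lam n) (hmun : AtMostRows mu n) :
    gFlagged n (lam \ mu) (fun _ => n) =
      ∑ᶠ α : Fin n → ℕ,
        tMono n (extendf n α) *
          ∑ᶠ q : {q : BurgeOut × (Cell → ℕ) //
                   IsCompatibleRPP n B (lam \ mu) (fun _ => n) q.1 q.2 ∧
                   ∀ r, ceqOn (lam \ mu) q.2 r = extendf n α r},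
            liftX n (schurOf n q.1.1.sh) := by
  have hs := hlam.ordConnected_sdiff hmu
  rw [finsum_tMono_mul_finsum_isCompatibleRPP hs fun c hc => hlamn c (Finset.mem_sdiff.1 hc).1]
  refine mul_right_cancel₀ (alternant_staircase_ne_zero (K := MvPolynomial (Fin n) ℤ)) ?_
  rw [gFlagged_eq_rppSum, rppSum_mul_alternant_staircase hs, Finset.sum_mul]
  refine Finset.sum_congr rfl fun R hR => ?_
  obtain ⟨hR, hb⟩ := Finset.mem_filter.1 hR
  obtain ⟨hR, hn⟩ := mem_rppFinset.1 hR
  rw [mul_assoc, hR.liftX_schurOf_burge_mul_alternant hs B hb hn]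
  rfl

end SkewG
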